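/- arXiv:2206.12743 — 3 statements merged into one kernel-verified Lean document; each statement's English description precedes it below -/
import Mathlib

section
/- Let q > 2 be a prime power, B ≥ 2 a real constant, and ξ : ℕ → ℝ a function with ξ(n) → ∞ as n → ∞. Then N(n,k) ∼ C(q) · q^{n−k} · k^{q−1} · (n−k)^{q−1} uniformly for ξ(n)·log n ≤ k ≤ n/B; precisely, for every ε > 0 there exists N₀ such that for all integers n ≥ N₀ and all integers k with ξ(n)·log n ≤ k ≤ n/B, one has |N(n,k) / (C(q) · q^{n−k} · k^{q−1} · (n−k)^{q−1}) − 1| ≤ ε. -/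
open Polynomial

/-- Number of monic irreducible factors counted with multiplicity. -/
noncomputable def Omega {F : Type*} [Field F] (f : F[X]) : ℕ :=
  (UniqueFactorizationMonoid.factors f).card

/-- `Ncount F n k` = number of monic polynomials of degree `n` over `F` with `Omega f = k`. -/
noncomputable def Ncount (F : Type*) [Field F] (n k : ℕ) : ℕ :=
  Set.ncard {f : F[X] | f.Monic ∧ f.natDegree = n ∧ Omega f = k}

/-- The constant `C(q)`. -/
noncomputable def Cconst (q : ℕ) (F : Type*) [Field F] : ℝ :=
  ((Nat.factorial (q - 1) : ℝ))⁻¹ ^ 2 * (1 - (q : ℝ)⁻¹) ^ (q ^ 2) *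
    ∏' p : {p : F[X] // p.Monic ∧ Irreducible p ∧ 2 ≤ p.natDegree},
      (1 - ((q : ℝ) ^ (p.1.natDegree - 1))⁻¹)⁻¹ * (1 - ((q : ℝ) ^ p.1.natDegree)⁻¹) ^ (q : ℕ)



noncomputable def geo (c : ℝ) (d : ℕ) : PowerSeries ℝ :=
  PowerSeries.mk fun i => if d ∣ i then c ^ (i / d) else 0

open Classical in
noncomputable def wexp {ι : Type*} (w : ι → ℕ) (s : Multiset ι) : ι →₀ ℕ :=
  Finsupp.onFinset s.toFinset (fun i => w i * s.count i) (by
    intro i hi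
    have : s.count i ≠ 0 := right_ne_zero_of_mul hi
    simpa using this)

open Classical in
lemma wexp_apply {ι : Type*} (w : ι → ℕ) (s : Multiset ι) (i : ι) :
    wexp w s i = w i * s.count i := by
  simp [wexp]

lemma wexp_inj {ι : Type*} (w : ι → ℕ) (hw : ∀ i, 1 ≤ w i) :
    Function.Injective (wexp w) := by
  classical
  intro s t h
  ext i
  have := DFunLike.congr_fun h i
  rw [wexp_apply, wexp_apply] at this
  exact Nat.eq_of_mul_eq_mul_left (hw i) this

lemma mem_of_weight {ι : Type*} (w : ι → ℕ) {m : ℕ} {s : Multiset ι}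
    (hs : (s.map w).sum = m) {i : ι} (hi : i ∈ s) : w i ≤ m := by
  rw [← hs]
  exact Multiset.single_le_sum (fun _ _ => Nat.zero_le _) _ (Multiset.mem_map_of_mem w hi)

open Classical in
lemma wexp_mem {ι : Type*} (w : ι → ℕ) (S : Finset ι) (m : ℕ)
    (hS : ∀ i, w i ≤ m → i ∈ S) (s : Multiset ι) (hs : (s.map w).sum = m) :
    wexp w s ∈ S.finsuppAntidiag m := by
  have hsub : s.toFinset ⊆ S := by
    intro i hi
    exact hS i (mem_of_weight w hs (by simpa using hi))
  rw [Finset.mem_finsuppAntidiag]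
  constructor
  · rw [← hs, Finset.sum_multiset_map_count]
    symm
    rw [Finset.sum_subset hsub]
    · refine Finset.sum_congr rfl fun i _ => ?_
      rw [wexp_apply]; simp [mul_comm]
    · intro i _ hi
      have : s.count i = 0 := by simpa using hi
      simp [this]
  · intro i hi
    apply hsub
    simp only [Finsupp.mem_support_iff, wexp_apply] at hi
    have : s.count i ≠ 0 := right_ne_zero_of_mul hi
    simpa using this

lemma finite_weight {ι : Type*} (w : ι → ℕ) (hw : ∀ i, 1 ≤ w i) (m : ℕ)
    (hfin : {i | w i ≤ m}.Finite) : {s : Multiset ι | (s.map w).sum = m}.Finite := by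
  classical
  refine Set.Finite.of_injOn (t := ↑(hfin.toFinset.finsuppAntidiag m)) (f := wexp w) ?_
    (wexp_inj w hw).injOn (Finset.finite_toSet _)
  intro s hs
  exact wexp_mem w _ m (by simp) s hs

lemma genfun {ι : Type*} (w : ι → ℕ) (hw : ∀ i, 1 ≤ w i) (S : Finset ι) (m : ℕ)
    (hS : ∀ i, w i ≤ m → i ∈ S) (c : ℝ) (T : Finset (Multiset ι))
    (hT : ∀ s, s ∈ T ↔ (s.map w).sum = m) :
    ∑ s ∈ T, c ^ s.card = PowerSeries.coeff m (∏ i ∈ S, geo c (w i)) := by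
  classical
  rw [PowerSeries.coeff_prod]
  refine Finset.sum_of_injOn (wexp w) (wexp_inj w hw).injOn ?_ ?_ ?_
  · intro s hs
    exact wexp_mem w S m hS s ((hT s).1 hs)
  · intro l hl hnot
    by_contra hne
    replace hne := Finset.prod_ne_zero_iff.1 hne
    have hdvd : ∀ i ∈ S, w i ∣ l i := by
      intro i hi
      have := hne i hi
      by_contra hd
      simp [geo, hd] at this
    rw [Finset.mem_finsuppAntidiag] at hl
    apply hnot
    have hc : ∀ i, wexp w (∑ j ∈ S, Multiset.replicate (l j / w j) j) i = l i := by
      intro i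
      rw [wexp_apply, Multiset.count_sum']
      simp only [Multiset.count_replicate]
      by_cases hi : i ∈ S
      · rw [Finset.sum_ite_eq' S i, if_pos hi]
        exact Nat.mul_div_cancel' (hdvd i hi)
      · rw [Finset.sum_ite_eq' S i, if_neg hi]
        have : l i = 0 := by
          by_contra h
          exact hi (hl.2 (by simpa using h))
        simp [this]
    refine ⟨∑ i ∈ S, Multiset.replicate (l i / w i) i, ?_, Finsupp.ext hc⟩
    rw [Finset.mem_coe, hT, ← hl.1]
    rw [← Multiset.coe_mapAddMonoidHom, map_sum, ← Multiset.coe_sumAddMonoidHom, map_sum]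
    refine Finset.sum_congr rfl fun i hi => ?_
    simp
    exact Nat.div_mul_cancel (hdvd i hi)
  · intro s hs
    have hsub : s.toFinset ⊆ S := by
      intro i hi
      exact hS i (mem_of_weight w ((hT s).1 hs) (by simpa using hi))
    have : ∀ i ∈ S, PowerSeries.coeff (wexp w s i) (geo c (w i)) = c ^ s.count i := by
      intro i _
      simp [geo, wexp_apply, Nat.mul_div_cancel_left _ (hw i)]
    rw [Finset.prod_congr rfl this, Finset.prod_pow_eq_pow_sum]
    congr 1
    rw [← Multiset.toFinset_sum_count_eq]
    refine Finset.sum_subset hsub ?_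
    intro i _ hi
    simpa using hi

/-- grouping the product by weight -/
lemma genfun' {ι : Type*} (w : ι → ℕ) (hw : ∀ i, 1 ≤ w i) (m D : ℕ) (hD : m ≤ D)
    (hfin : {i | w i ≤ D}.Finite) (c : ℝ) (T : Finset (Multiset ι))
    (hT : ∀ s, s ∈ T ↔ (s.map w).sum = m) :
    ∑ s ∈ T, c ^ s.card = PowerSeries.coeff m
      (∏ d ∈ Finset.Icc 1 D, geo c d ^ (Set.ncard {i | w i = d})) := by
  classical
  rw [genfun w hw hfin.toFinset m (fun i hi => by simpa using hi.trans hD) c T hT]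
  congr 1
  rw [← Finset.prod_fiberwise_of_maps_to (s := hfin.toFinset) (t := Finset.Icc 1 D) (g := w)
    (fun i hi => by simpa [hw i] using hi)]
  refine Finset.prod_congr rfl fun d hd => ?_
  rw [Finset.prod_congr rfl (g := fun _ => geo c d), Finset.prod_const]
  · congr 1
    rw [← Set.ncard_coe_finset]
    congr 1
    ext i
    simp only [Finset.mem_Icc] at hd
    simp
    omega
  · intro i hi
    rw [(Finset.mem_filter.1 hi).2]


lemma exists_fact {F : Type*} [Field F] (f : F[X]) (hf : f.Monic) :
    ∃ s : Multiset F[X], (∀ p ∈ s, p.Monic ∧ Irreducible p) ∧ s.prod = f := by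
  classical
  refine ⟨UniqueFactorizationMonoid.normalizedFactors f, ?_, ?_⟩
  · intro p hp
    rw [UniqueFactorizationMonoid.mem_normalizedFactors_iff' hf.ne_zero] at hp
    refine ⟨?_, hp.1⟩
    rw [← hp.2.1]
    exact Polynomial.monic_normalize hp.1.ne_zero
  · rw [UniqueFactorizationMonoid.prod_normalizedFactors_eq hf.ne_zero, hf.normalize_eq_self]

open Classical in
lemma nf_prod {F : Type*} [Field F] (s : Multiset F[X])
    (hs : ∀ p ∈ s, p.Monic ∧ Irreducible p) :
    UniqueFactorizationMonoid.normalizedFactors s.prod = s := by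
  rw [UniqueFactorizationMonoid.normalizedFactors_prod_eq _ (fun p hp => (hs p hp).2)]
  conv_rhs => rw [← Multiset.map_id s]
  exact Multiset.map_congr rfl fun p hp => (hs p hp).1.normalize_eq_self

lemma fact_inj {F : Type*} [Field F] (s t : Multiset F[X])
    (hs : ∀ p ∈ s, p.Monic ∧ Irreducible p) (ht : ∀ p ∈ t, p.Monic ∧ Irreducible p)
    (h : s.prod = t.prod) : s = t := by
  classical
  rw [← nf_prod s hs, ← nf_prod t ht, h]

lemma Omega_prod {F : Type*} [Field F] (s : Multiset F[X])
    (hs : ∀ p ∈ s, p.Monic ∧ Irreducible p) : Omega s.prod = s.card := by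
  classical
  conv_rhs => rw [← nf_prod s hs]
  rw [Omega, UniqueFactorizationMonoid.normalizedFactors, Multiset.card_map]

lemma monic_prod {F : Type*} [Field F] (s : Multiset F[X])
    (hs : ∀ p ∈ s, p.Monic ∧ Irreducible p) : s.prod.Monic := by
  have := Polynomial.monic_multiset_prod_of_monic s id (fun p hp => (hs p hp).1)
  simpa using this

lemma natDegree_prod' {F : Type*} [Field F] (s : Multiset F[X])
    (hs : ∀ p ∈ s, p.Monic ∧ Irreducible p) : s.prod.natDegree = (s.map natDegree).sum :=
  Polynomial.natDegree_multiset_prod_of_monic s (fun p hp => (hs p hp).1)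

lemma ncard_monic (F : Type*) [Field F] [Fintype F] (n : ℕ) :
    {f : F[X] | f.Monic ∧ f.natDegree = n}.ncard = Fintype.card F ^ n := by
  rw [← Nat.card_coe_set_eq]
  refine (Nat.card_congr ((Polynomial.monicEquivDegreeLT (R := F) n).trans
    (degreeLTEquiv F n).toEquiv)).trans ?_
  simp

lemma finite_monic (F : Type*) [Field F] [Fintype F] (n : ℕ) :
    {f : F[X] | f.Monic ∧ f.natDegree = n}.Finite := by
  apply Set.finite_of_ncard_pos
  rw [ncard_monic]
  exact pow_pos Fintype.card_pos n

lemma finite_monic_le (F : Type*) [Field F] [Fintype F] (n : ℕ) :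
    {f : F[X] | f.Monic ∧ f.natDegree ≤ n}.Finite := by
  have : {f : F[X] | f.Monic ∧ f.natDegree ≤ n} ⊆
      ⋃ i ∈ Finset.range (n+1), {f : F[X] | f.Monic ∧ f.natDegree = i} := by
    intro f hf
    simp only [Set.mem_iUnion, Finset.mem_range]
    exact ⟨f.natDegree, Nat.lt_succ_of_le hf.2, hf.1, rfl⟩
  refine Set.Finite.subset ?_ this
  exact Set.Finite.biUnion (Finset.finite_toSet _) (fun i _ => finite_monic F i)

noncomputable def piq (F : Type*) [Field F] (d : ℕ) : ℕ :=
  Set.ncard {p : F[X] | p.Monic ∧ Irreducible p ∧ p.natDegree = d}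

abbrev Irr (F : Type*) [Field F] := {p : F[X] // p.Monic ∧ Irreducible p}
abbrev Irr2 (F : Type*) [Field F] := {p : F[X] // p.Monic ∧ Irreducible p ∧ 2 ≤ p.natDegree}

lemma ncard_Irr (F : Type*) [Field F] (d : ℕ) :
    Set.ncard {i : Irr F | i.1.natDegree = d} = piq F d := by
  rw [piq, ← Set.ncard_image_of_injective _ (Subtype.val_injective (p := fun p : F[X] => p.Monic ∧ Irreducible p))]
  congr 1
  ext p
  simp [and_assoc]
  tauto

lemma ncard_Irr2 (F : Type*) [Field F] (d : ℕ) (hd : 2 ≤ d) :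
    Set.ncard {i : Irr2 F | i.1.natDegree = d} = piq F d := by
  rw [piq, ← Set.ncard_image_of_injective _
    (Subtype.val_injective (p := fun p : F[X] => p.Monic ∧ Irreducible p ∧ 2 ≤ p.natDegree))]
  congr 1
  ext p
  simp [and_assoc]
  aesop

lemma ncard_Irr2' (F : Type*) [Field F] (d : ℕ) (hd : 1 ≤ d) :
    Set.ncard {i : Irr2 F | i.1.natDegree - 1 = d} = piq F (d + 1) := by
  rw [← ncard_Irr2 F (d+1) (by omega)]
  congr 1
  ext p
  simp
  omega

lemma finite_Irr (F : Type*) [Field F] [Fintype F] (n : ℕ) :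
    {i : Irr F | i.1.natDegree ≤ n}.Finite := by
  refine Set.Finite.of_injOn (t := {f : F[X] | f.Monic ∧ f.natDegree ≤ n})
    (f := Subtype.val) ?_ Subtype.val_injective.injOn (finite_monic_le F n)
  intro i hi
  exact ⟨i.2.1, hi⟩

lemma finite_Irr2 (F : Type*) [Field F] [Fintype F] (n : ℕ) :
    {i : Irr2 F | i.1.natDegree ≤ n}.Finite := by
  refine Set.Finite.of_injOn (t := {f : F[X] | f.Monic ∧ f.natDegree ≤ n})
    (f := Subtype.val) ?_ Subtype.val_injective.injOn (finite_monic_le F n)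
  intro i hi
  exact ⟨i.2.1, hi⟩

lemma finite_Irr2' (F : Type*) [Field F] [Fintype F] (n : ℕ) :
    {i : Irr2 F | i.1.natDegree - 1 ≤ n}.Finite :=
  (finite_Irr2 F (n+1)).subset (fun i hi => by simp at hi ⊢; omega)

lemma euler_one (F : Type*) [Field F] [Fintype F] (m D : ℕ) (hD : m ≤ D) :
    PowerSeries.coeff m (∏ d ∈ Finset.Icc 1 D, geo 1 d ^ (piq F d)) =
      (Fintype.card F : ℝ) ^ m := by
  classical
  have hfin := finite_weight (fun i : Irr F => i.1.natDegree)
    (fun i => i.2.2.natDegree_pos) m (finite_Irr F m)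
  have h := genfun' (fun i : Irr F => i.1.natDegree) (fun i => i.2.2.natDegree_pos) m D hD
    (finite_Irr F D) 1 hfin.toFinset (by simp)
  simp only [ncard_Irr] at h
  rw [← h]
  simp only [one_pow, Finset.sum_const, nsmul_eq_mul, mul_one]
  norm_cast
  rw [← ncard_monic F m, ← Set.ncard_coe_finset]
  have hms : ∀ s : Multiset (Irr F), ∀ p ∈ s.map Subtype.val, p.Monic ∧ Irreducible p := by
    intro s p hp
    obtain ⟨i, _, rfl⟩ := Multiset.mem_map.1 hp
    exact i.2
  refine Set.ncard_congr (fun s _ => (s.map Subtype.val).prod) ?_ ?_ ?_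
  · intro s hs
    refine ⟨monic_prod _ (hms s), ?_⟩
    rw [natDegree_prod' _ (hms s), Multiset.map_map]
    simpa using hs
  · intro s t _ _ hst
    have := fact_inj _ _ (hms s) (hms t) hst
    exact Multiset.map_injective Subtype.val_injective this
  · rintro f ⟨hf, hfm⟩
    obtain ⟨s, hs, rfl⟩ := exists_fact f hf
    refine ⟨s.attach.map (fun p => ⟨p.1, hs p.1 p.2⟩), ?_, ?_⟩
    · rw [natDegree_prod' _ hs] at hfm
      simp only [Set.Finite.coe_toFinset, Set.mem_ofPred_eq, Multiset.map_map, Function.comp_def]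
      rw [← hfm, Multiset.attach_map_val' s natDegree]
    · simp only [Multiset.map_map, Function.comp_def, Multiset.attach_map_val]

lemma Ncount_eq (F : Type*) [Field F] [Fintype F] (m k : ℕ) (T : Finset (Multiset (Irr2 F)))
    (hT : ∀ s, s ∈ T ↔ (s.map (fun i : Irr2 F => i.1.natDegree - 1)).sum = m) :
    Ncount F (m + k) k =
      ∑ s ∈ T with s.card ≤ k, (Fintype.card F).multichoose (k - s.card) := by
  classical
  have h1 : ∀ s : Multiset (Irr2 F), (Fintype.card F).multichoose (k - s.card) =
      (Finset.univ : Finset (Sym F (k - s.card))).card := by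
    intro s
    rw [Finset.card_univ, Sym.card_sym_eq_multichoose]
  simp only [h1]
  rw [← Finset.card_sigma, Ncount, ← Set.ncard_coe_finset]
  symm
  have hms : ∀ (s : Multiset (Irr2 F)) (t : Multiset F),
      ∀ p ∈ (t.map (fun a => X - C a) + s.map Subtype.val), p.Monic ∧ Irreducible p := by
    intro s t p hp
    rcases Multiset.mem_add.1 hp with hp | hp
    · obtain ⟨a, _, rfl⟩ := Multiset.mem_map.1 hp
      exact ⟨monic_X_sub_C a, irreducible_X_sub_C a⟩
    · obtain ⟨i, _, rfl⟩ := Multiset.mem_map.1 hp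
      exact ⟨i.2.1, i.2.2.1⟩
  have hdeg : ∀ s : Multiset (Irr2 F), (s.map (fun i : Irr2 F => i.1.natDegree)).sum =
      (s.map (fun i : Irr2 F => i.1.natDegree - 1)).sum + s.card := by
    intro s
    induction s using Multiset.induction_on with
    | empty => simp
    | cons a s ih =>
      have := a.2.2.2
      simp only [Multiset.map_cons, Multiset.sum_cons, Multiset.card_cons, ih]
      omega
  refine Set.ncard_congr
    (fun x _ => (((x.2 : Multiset F).map (fun a => X - C a)) + x.1.map Subtype.val).prod) ?_ ?_ ?_
  · rintro ⟨s, t⟩ hst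
    simp only [Finset.mem_coe, Finset.mem_sigma, Finset.mem_filter, hT, Finset.mem_univ,
      and_true] at hst
    refine ⟨monic_prod _ (hms s t), ?_, ?_⟩
    · rw [natDegree_prod' _ (hms s t), Multiset.map_add, Multiset.sum_add, Multiset.map_map,
        Multiset.map_map]
      simp only [Function.comp_def, natDegree_X_sub_C, hdeg]
      simp
      omega
    · rw [Omega_prod _ (hms s t)]
      simp
      omega
  · rintro ⟨s, t⟩ ⟨s', t'⟩ hst hst' h
    have h2 := fact_inj _ _ (hms s t) (hms s' t') h
    have hfil : ∀ (s : Multiset (Irr2 F)) (t : Multiset F),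
        (t.map (fun a => X - C a) + s.map Subtype.val).filter (fun p => 2 ≤ p.natDegree) =
          s.map Subtype.val := by
      intro s t
      rw [Multiset.filter_add]
      rw [Multiset.filter_eq_nil.2, Multiset.filter_eq_self.2, zero_add]
      · intro p hp
        obtain ⟨i, _, rfl⟩ := Multiset.mem_map.1 hp
        exact i.2.2.2
      · intro p hp
        obtain ⟨a, _, rfl⟩ := Multiset.mem_map.1 hp
        simp
    have h3 : s = s' := by
      have := hfil s t
      rw [h2, hfil s' t'] at this
      exact (Multiset.map_injective Subtype.val_injective this).symm
    subst h3
    have h4 := add_right_cancel h2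
    have h5 : Function.Injective (fun a : F => X - C a) := by
      intro a b hab
      have : C a = C b := sub_right_injective hab
      exact C_injective this
    have h6 := Multiset.map_injective h5 h4
    have h7 : t = t' := Subtype.ext h6
    rw [h7]
  · rintro f ⟨hf, hfm, hfO⟩
    obtain ⟨s, hs, rfl⟩ := exists_fact f hf
    rw [Omega_prod _ hs] at hfO
    rw [natDegree_prod' _ hs] at hfm
    have hmf : ∀ p : {p // p ∈ s.filter (fun p => 2 ≤ p.natDegree)}, p.1 ∈ s ∧ 2 ≤ p.1.natDegree :=
      fun p => Multiset.mem_filter.1 p.2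
    let s2 : Multiset (Irr2 F) := (s.filter (fun p => 2 ≤ p.natDegree)).attach.map
      (fun p => ⟨p.1, (hs p.1 (hmf p).1).1,
        (hs p.1 (hmf p).1).2, (hmf p).2⟩)
    have hs2 : s2.map Subtype.val = s.filter (fun p => 2 ≤ p.natDegree) := by
      simp only [s2, Multiset.map_map, Function.comp_def, Multiset.attach_map_val]
    let t : Multiset F := (s.filter (fun p => ¬ 2 ≤ p.natDegree)).map (fun p => - p.coeff 0)
    have ht : t.map (fun a => X - C a) = s.filter (fun p => ¬ 2 ≤ p.natDegree) := by
      simp only [t, Multiset.map_map, Function.comp_def]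
      conv_rhs => rw [← Multiset.map_id (s.filter (fun p => ¬ 2 ≤ p.natDegree))]
      refine Multiset.map_congr rfl fun p hp => ?_
      have hp' := Multiset.mem_filter.1 hp
      have hm := (hs p hp'.1).1
      have hpos := (hs p hp'.1).2.natDegree_pos
      have h1 : p.natDegree = 1 := by omega
      have := hm.eq_X_add_C h1
      simp only [map_neg, sub_neg_eq_add, id]
      exact this.symm
    have hsum : t.map (fun a => X - C a) + s2.map Subtype.val = s := by
      rw [ht, hs2, add_comm, Multiset.filter_add_not]
    have hcard : t.card + s2.card = k := by
      rw [← hfO, ← hsum]; simp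
    have hd2 : t.card + (s2.map (fun i : Irr2 F => i.1.natDegree)).sum = m + k := by
      rw [← hfm, ← hsum]
      simp [Multiset.map_map, Function.comp_def]
    rw [hdeg] at hd2
    refine ⟨⟨s2, ⟨t, by omega⟩⟩, ?_, ?_⟩
    · have e1 : (s2.map (fun i : Irr2 F => i.1.natDegree - 1)).sum = m := by omega
      have e2 : s2.card ≤ k := by omega
      rw [Finset.mem_coe, Finset.mem_sigma, Finset.mem_filter, hT]
      exact ⟨⟨e1, e2⟩, Finset.mem_univ _⟩
    · show (t.map _ + s2.map _).prod = _
      rw [hsum]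

lemma sum_div_piq (F : Type*) [Field F] [Fintype F] (n : ℕ) (hn : n ≠ 0) :
    ∑ d ∈ n.divisors, d * piq F d = Fintype.card F ^ n := by
  classical
  set q := Fintype.card F with hq
  have hq1 : 1 < q := Fintype.one_lt_card
  set f : F[X] := X ^ q ^ n - X with hf
  have hf0 : f ≠ 0 := FiniteField.X_pow_card_pow_sub_X_ne_zero F hn hq1
  have hfd : f.natDegree = q ^ n := FiniteField.X_pow_card_pow_sub_X_natDegree_eq F hn hq1
  have hfm : f.Monic := by
    rw [hf]
    apply Polynomial.monic_X_pow_sub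
    rw [degree_X]
    exact_mod_cast Nat.one_lt_pow hn hq1
  obtain ⟨p, hp⟩ := CharP.exists F
  have hsq : Squarefree f := by
    apply Polynomial.Separable.squarefree
    apply galois_poly_separable p
    apply dvd_pow _ hn
    rw [← CharP.cast_eq_zero_iff F p]
    simp [hq]
  rw [UniqueFactorizationMonoid.squarefree_iff_nodup_normalizedFactors hf0] at hsq
  set S : Finset F[X] := ⟨UniqueFactorizationMonoid.normalizedFactors f, hsq⟩ with hS
  have hmem : ∀ p, p ∈ S ↔ p.Monic ∧ Irreducible p ∧ p.natDegree ∣ n := by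
    intro p
    rw [hS, Finset.mem_mk, UniqueFactorizationMonoid.mem_normalizedFactors_iff' hf0]
    constructor
    · rintro ⟨h1, h2, h3⟩
      refine ⟨?_, h1, ?_⟩
      · rw [← h2]; exact Polynomial.monic_normalize h1.ne_zero
      · rw [h1.natDegree_dvd_iff_dvd_X_pow_card_pow_sub_X, Nat.card_eq_fintype_card]
        exact h3
    · rintro ⟨h1, h2, h3⟩
      refine ⟨h2, h1.normalize_eq_self, ?_⟩
      rw [h2.natDegree_dvd_iff_dvd_X_pow_card_pow_sub_X, Nat.card_eq_fintype_card] at h3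
      exact h3
  have hprod : ∑ p ∈ S, p.natDegree = q ^ n := by
    rw [← hfd]
    conv_rhs => rw [← hfm.normalize_eq_self,
      ← UniqueFactorizationMonoid.prod_normalizedFactors_eq hf0]
    rw [natDegree_prod' _ (fun p hp => ⟨((hmem p).1 hp).1, ((hmem p).1 hp).2.1⟩)]
    rfl
  rw [← hprod, ← Finset.sum_fiberwise_of_maps_to (s := S) (t := n.divisors) (g := natDegree)
    (fun p hp => by rw [Nat.mem_divisors]; exact ⟨((hmem p).1 hp).2.2, hn⟩)]
  refine Finset.sum_congr rfl fun d hd => ?_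
  rw [Finset.sum_congr rfl (g := fun _ => d) (fun p hp => (Finset.mem_filter.1 hp).2),
    Finset.sum_const, smul_eq_mul, mul_comm, piq, ← Set.ncard_coe_finset]
  congr 2
  ext p
  have := (Nat.mem_divisors.1 hd).1
  simp [hmem]
  aesop


/-- absolutely summable at `x` with value `y` -/
def AbsSum (x : ℝ) (f : PowerSeries ℝ) (y : ℝ) : Prop :=
  Summable (fun i => ‖PowerSeries.coeff i f * x ^ i‖) ∧
    ∑' i, PowerSeries.coeff i f * x ^ i = y

lemma coeff_mul_pow (x : ℝ) (f g : PowerSeries ℝ) (n : ℕ) :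
    PowerSeries.coeff n (f * g) * x ^ n = ∑ kl ∈ Finset.HasAntidiagonal.antidiagonal n,
      (PowerSeries.coeff kl.1 f * x ^ kl.1) * (PowerSeries.coeff kl.2 g * x ^ kl.2) := by
  rw [PowerSeries.coeff_mul, Finset.sum_mul]
  refine Finset.sum_congr rfl fun kl hkl => ?_
  rw [← Finset.HasAntidiagonal.mem_antidiagonal.1 hkl, pow_add]
  ring

lemma AbsSum.mul {x : ℝ} {f g : PowerSeries ℝ} {y z : ℝ} (hf : AbsSum x f y) (hg : AbsSum x g z) :
    AbsSum x (f * g) (y * z) := by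
  have h1 := summable_norm_sum_mul_antidiagonal_of_summable_norm
    (f := fun i => PowerSeries.coeff i f * x ^ i) (g := fun i => PowerSeries.coeff i g * x ^ i)
    hf.1 hg.1
  have h2 := tsum_mul_tsum_eq_tsum_sum_antidiagonal_of_summable_norm
    (f := fun i => PowerSeries.coeff i f * x ^ i) (g := fun i => PowerSeries.coeff i g * x ^ i)
    hf.1 hg.1
  constructor
  · refine h1.congr fun n => ?_
    rw [coeff_mul_pow]
  · rw [← hf.2, ← hg.2, h2]
    exact tsum_congr fun n => coeff_mul_pow x f g n

lemma AbsSum.one (x : ℝ) : AbsSum x 1 1 := by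
  have h : ∀ i, i ∉ ({0} : Finset ℕ) → PowerSeries.coeff i (1 : PowerSeries ℝ) * x ^ i = 0 := by
    intro i hi
    have : i ≠ 0 := by simpa using hi
    simp [PowerSeries.coeff_one, this]
  constructor
  · exact summable_of_ne_finset_zero (s := {0}) (fun i hi => by rw [h i hi, norm_zero])
  · rw [tsum_eq_sum h]; simp

lemma AbsSum.X_pow (x : ℝ) (d : ℕ) : AbsSum x (PowerSeries.X ^ d) (x ^ d) := by
  have h : ∀ i, i ∉ ({d} : Finset ℕ) →
      PowerSeries.coeff i (PowerSeries.X ^ d : PowerSeries ℝ) * x ^ i = 0 := by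
    intro i hi
    have : i ≠ d := by simpa using hi
    simp [PowerSeries.coeff_X_pow, this]
  constructor
  · exact summable_of_ne_finset_zero (s := {d}) (fun i hi => by rw [h i hi, norm_zero])
  · rw [tsum_eq_sum h]; simp [PowerSeries.coeff_X_pow]

lemma AbsSum.sub {x : ℝ} {f g : PowerSeries ℝ} {y z : ℝ} (hf : AbsSum x f y) (hg : AbsSum x g z) :
    AbsSum x (f - g) (y - z) := by
  constructor
  · refine Summable.of_nonneg_of_le (fun _ => norm_nonneg _) (fun i => ?_) (hf.1.add hg.1)
    rw [map_sub, sub_mul]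
    exact norm_sub_le _ _
  · simp only [map_sub, sub_mul]
    rw [hf.1.of_norm.tsum_sub hg.1.of_norm, hf.2, hg.2]

lemma AbsSum.pow {x : ℝ} {f : PowerSeries ℝ} {y : ℝ} (hf : AbsSum x f y) (n : ℕ) :
    AbsSum x (f ^ n) (y ^ n) := by
  induction n with
  | zero => simpa using AbsSum.one x
  | succ n ih => rw [pow_succ, pow_succ]; exact ih.mul hf

lemma AbsSum.prod {ι : Type*} {x : ℝ} {f : ι → PowerSeries ℝ} {y : ι → ℝ} (s : Finset ι)
    (hf : ∀ i ∈ s, AbsSum x (f i) (y i)) : AbsSum x (∏ i ∈ s, f i) (∏ i ∈ s, y i) := by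
  classical
  induction s using Finset.induction_on with
  | empty => simpa using AbsSum.one x
  | insert a s ha ih =>
    rw [Finset.prod_insert ha, Finset.prod_insert ha]
    exact (hf a (Finset.mem_insert_self _ _)).mul
      (ih fun i hi => hf i (Finset.mem_insert_of_mem hi))

lemma AbsSum.geo {x c : ℝ} (hx : 0 ≤ x) (hc : 0 ≤ c) {d : ℕ} (hd : 1 ≤ d) (h : c * x ^ d < 1) :
    AbsSum x (geo c d) (1 - c * x ^ d)⁻¹ := by
  have hinj : Function.Injective (fun j : ℕ => d * j) :=
    fun a b hab => Nat.eq_of_mul_eq_mul_left hd hab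
  have hs : HasSum (fun i => PowerSeries.coeff i (_root_.geo c d) * x ^ i) (1 - c * x ^ d)⁻¹ := by
    rw [← hinj.hasSum_iff]
    · have := hasSum_geometric_of_lt_one (r := c * x ^ d) (by positivity) h
      refine this.congr_fun ?_ |> fun h => h
      intro j
      simp [_root_.geo, Nat.mul_div_cancel_left _ hd, mul_pow, pow_mul]
    · intro i hi
      have : ¬ d ∣ i := by
        rintro ⟨j, rfl⟩
        exact hi ⟨j, rfl⟩
      simp [_root_.geo, this]
  refine ⟨?_, hs.tsum_eq⟩
  refine hs.summable.congr fun i => ?_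
  rw [Real.norm_of_nonneg]
  apply mul_nonneg _ (by positivity)
  simp only [_root_.geo, PowerSeries.coeff_mk]
  split_ifs <;> positivity

lemma one_sub_mul_geo {d : ℕ} (hd : 1 ≤ d) : (1 - PowerSeries.X ^ d) * geo 1 d = 1 := by
  ext i
  rw [sub_mul, one_mul, map_sub, PowerSeries.coeff_X_pow_mul', PowerSeries.coeff_one]
  simp only [geo, PowerSeries.coeff_mk, one_pow]
  rcases eq_or_ne i 0 with rfl | hi
  · have : ¬ d ≤ 0 := by omega
    simp [this]
  · simp only [hi, if_false]
    by_cases h : d ≤ i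
    · rw [if_pos h]
      have : d ∣ i - d ↔ d ∣ i := by
        rw [Nat.dvd_sub_iff_left h dvd_rfl]
      simp [this]
    · have : ¬ d ∣ i := fun hdi => h (Nat.le_of_dvd (Nat.pos_of_ne_zero hi) hdi)
      simp [h, this]

def Maj (f g : PowerSeries ℝ) : Prop := ∀ i, |PowerSeries.coeff i f| ≤ PowerSeries.coeff i g

lemma Maj.mul {f g f' g' : PowerSeries ℝ} (h : Maj f g) (h' : Maj f' g') :
    Maj (f * f') (g * g') := by
  intro i
  rw [PowerSeries.coeff_mul, PowerSeries.coeff_mul]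
  refine (Finset.abs_sum_le_sum_abs _ _).trans (Finset.sum_le_sum fun p _ => ?_)
  rw [abs_mul]
  exact mul_le_mul (h _) (h' _) (abs_nonneg _) ((abs_nonneg _).trans (h _))

lemma Maj.one : Maj 1 1 := by
  intro i
  rw [PowerSeries.coeff_one]
  split_ifs <;> simp

lemma Maj.pow {f g : PowerSeries ℝ} (h : Maj f g) (n : ℕ) : Maj (f ^ n) (g ^ n) := by
  induction n with
  | zero => simpa using Maj.one
  | succ n ih => rw [pow_succ, pow_succ]; exact ih.mul h

lemma Maj.prod {ι : Type*} {f g : ι → PowerSeries ℝ} (s : Finset ι)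
    (hf : ∀ i ∈ s, Maj (f i) (g i)) : Maj (∏ i ∈ s, f i) (∏ i ∈ s, g i) := by
  classical
  induction s using Finset.induction_on with
  | empty => simpa using Maj.one
  | insert a s ha ih =>
    rw [Finset.prod_insert ha, Finset.prod_insert ha]
    exact (hf a (Finset.mem_insert_self _ _)).mul
      (ih fun i hi => hf i (Finset.mem_insert_of_mem hi))

lemma Maj.geo_self {c : ℝ} (hc : 0 ≤ c) (d : ℕ) : Maj (geo c d) (geo c d) := by
  intro i
  simp only [geo, PowerSeries.coeff_mk]
  split_ifs
  · rw [abs_of_nonneg (by positivity)]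
  · simp

lemma Maj.one_sub {d : ℕ} (hd : 1 ≤ d) : Maj (1 - PowerSeries.X ^ d) (geo 1 d) := by
  intro i
  rw [map_sub, PowerSeries.coeff_one, PowerSeries.coeff_X_pow]
  simp only [geo, PowerSeries.coeff_mk, one_pow]
  rcases eq_or_ne i 0 with rfl | hi
  · have : ¬ 0 = d := by omega
    simp [this]
  · rcases eq_or_ne i d with rfl | hid
    · simp [hi]
    · simp only [hi, hid, if_false, sub_zero, abs_zero]
      split_ifs <;> simp

lemma dvd_geo_sub_one {d : ℕ} (hd : 1 ≤ d) : (PowerSeries.X ^ d : PowerSeries ℝ) ∣ geo 1 d - 1 :=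
  ⟨geo 1 d, by have := one_sub_mul_geo hd; linear_combination this⟩

lemma dvd_pow_sub_one {R : Type*} [CommRing R] {a f : R} (h : a ∣ f - 1) (n : ℕ) :
    a ∣ f ^ n - 1 := by
  have := sub_dvd_pow_sub_pow f 1 n
  rw [one_pow] at this
  exact h.trans this

lemma dvd_mul_sub_one {R : Type*} [CommRing R] {a f g : R} (h : a ∣ f - 1) (h' : a ∣ g - 1) :
    a ∣ f * g - 1 := by
  have : f * g - 1 = f * (g - 1) + (f - 1) := by ring
  rw [this]
  exact dvd_add (h'.mul_left _) h

lemma coeff_prod_stable (E : ℕ → PowerSeries ℝ)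
    (hE : ∀ d, 1 ≤ d → PowerSeries.X ^ d ∣ E d - 1) {i D : ℕ} (h : i ≤ D) :
    PowerSeries.coeff i (∏ d ∈ Finset.Icc 1 D, E d) =
      PowerSeries.coeff i (∏ d ∈ Finset.Icc 1 i, E d) := by
  induction D, h using Nat.le_induction with
  | base => rfl
  | succ D hD ih =>
    rw [← ih, Finset.prod_Icc_succ_top (by omega)]
    have h1 := (hE (D+1) (by omega)).mul_left (∏ d ∈ Finset.Icc 1 D, E d)
    rw [mul_sub, mul_one, PowerSeries.X_pow_dvd_iff] at h1
    have := h1 i (by omega)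
    rw [map_sub] at this
    linarith

lemma coeff_congr_mul {f g f' g' : PowerSeries ℝ} {D : ℕ}
    (h : ∀ i ≤ D, PowerSeries.coeff i f = PowerSeries.coeff i g)
    (h' : ∀ i ≤ D, PowerSeries.coeff i f' = PowerSeries.coeff i g') :
    ∀ i ≤ D, PowerSeries.coeff i (f * f') = PowerSeries.coeff i (g * g') := by
  intro i hi
  rw [PowerSeries.coeff_mul, PowerSeries.coeff_mul]
  refine Finset.sum_congr rfl fun p hp => ?_
  have := Finset.HasAntidiagonal.mem_antidiagonal.1 hp
  rw [h _ (by omega), h' _ (by omega)]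

lemma coeff_congr_pow {f g : PowerSeries ℝ} {D : ℕ}
    (h : ∀ i ≤ D, PowerSeries.coeff i f = PowerSeries.coeff i g) (n : ℕ) :
    ∀ i ≤ D, PowerSeries.coeff i (f ^ n) = PowerSeries.coeff i (g ^ n) := by
  induction n with
  | zero => simp
  | succ n ih => rw [pow_succ, pow_succ]; exact coeff_congr_mul ih h

/-- coefficients of partial majorant products increase -/
lemma coeff_prod_mono (E : ℕ → PowerSeries ℝ)
    (hE : ∀ d, 1 ≤ d → PowerSeries.X ^ d ∣ E d - 1) (hpos : ∀ d, 1 ≤ d → Maj (E d) (E d))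
    {D D' : ℕ} (h : D ≤ D') (i : ℕ) :
    PowerSeries.coeff i (∏ d ∈ Finset.Icc 1 D, E d) ≤
      PowerSeries.coeff i (∏ d ∈ Finset.Icc 1 D', E d) := by
  induction D', h using Nat.le_induction with
  | base => rfl
  | succ D' hD ih =>
    refine ih.trans ?_
    rw [Finset.prod_Icc_succ_top (by omega), PowerSeries.coeff_mul]
    have hmem : (i, 0) ∈ Finset.HasAntidiagonal.antidiagonal i := by simp
    have hE0 : PowerSeries.coeff 0 (E (D'+1)) = 1 := by
      have h1 := hE (D'+1) (by omega)
      rw [PowerSeries.X_pow_dvd_iff] at h1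
      have := h1 0 (by omega)
      rw [map_sub, PowerSeries.coeff_one, if_pos rfl] at this
      linarith
    have hM := Maj.prod (f := E) (g := E) (Finset.Icc 1 D')
      (fun d hd => hpos d (Finset.mem_Icc.1 hd).1)
    refine le_trans (le_of_eq ?_) (Finset.single_le_sum (f := fun p : ℕ × ℕ =>
      PowerSeries.coeff p.1 (∏ d ∈ Finset.Icc 1 D', E d) * PowerSeries.coeff p.2 (E (D'+1)))
      (fun p _ => mul_nonneg ((abs_nonneg _).trans (hM _))
        ((abs_nonneg _).trans (hpos (D'+1) (by omega) _))) hmem)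
    simp [hE0]

lemma tannery_H (x : ℝ) (hx : 0 ≤ x) (E E' : ℕ → PowerSeries ℝ) (e e' : ℕ → ℝ) (K : ℝ)
    (hE : ∀ d, 1 ≤ d → PowerSeries.X ^ d ∣ E d - 1)
    (hE' : ∀ d, 1 ≤ d → PowerSeries.X ^ d ∣ E' d - 1)
    (hM : ∀ d, 1 ≤ d → Maj (E d) (E' d)) (hM' : ∀ d, 1 ≤ d → Maj (E' d) (E' d))
    (hA : ∀ d, 1 ≤ d → AbsSum x (E d) (e d)) (hA' : ∀ d, 1 ≤ d → AbsSum x (E' d) (e' d))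
    (hK : ∀ D, ∏ d ∈ Finset.Icc 1 D, e' d ≤ K) :
    Summable (fun i => ‖PowerSeries.coeff i (∏ d ∈ Finset.Icc 1 i, E d) * x ^ i‖) ∧
    Filter.Tendsto (fun D => ∏ d ∈ Finset.Icc 1 D, e d) Filter.atTop
      (nhds (∑' i, PowerSeries.coeff i (∏ d ∈ Finset.Icc 1 i, E d) * x ^ i)) := by
  have hPM : ∀ D, Maj (∏ d ∈ Finset.Icc 1 D, E d) (∏ d ∈ Finset.Icc 1 D, E' d) := fun D =>
    Maj.prod _ fun d hd => hM d (Finset.mem_Icc.1 hd).1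
  have hPA : ∀ D, AbsSum x (∏ d ∈ Finset.Icc 1 D, E d) (∏ d ∈ Finset.Icc 1 D, e d) := fun D =>
    AbsSum.prod _ fun d hd => hA d (Finset.mem_Icc.1 hd).1
  have hPA' : ∀ D, AbsSum x (∏ d ∈ Finset.Icc 1 D, E' d) (∏ d ∈ Finset.Icc 1 D, e' d) := fun D =>
    AbsSum.prod _ fun d hd => hA' d (Finset.mem_Icc.1 hd).1
  have hnn : ∀ D i, 0 ≤ PowerSeries.coeff i (∏ d ∈ Finset.Icc 1 D, E' d) := fun D i =>
    (abs_nonneg _).trans (hPM D i)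
  set b : ℕ → ℝ := fun i => PowerSeries.coeff i (∏ d ∈ Finset.Icc 1 i, E' d) * x ^ i with hb
  have hbn : ∀ i, 0 ≤ b i := fun i => mul_nonneg (hnn i i) (by positivity)
  have hsb : Summable b := by
    refine summable_of_sum_range_le (c := K) hbn fun n => ?_
    have h1 : ∑ i ∈ Finset.range n, b i = ∑ i ∈ Finset.range n,
        PowerSeries.coeff i (∏ d ∈ Finset.Icc 1 n, E' d) * x ^ i := by
      refine Finset.sum_congr rfl fun i hi => ?_
      rw [hb, coeff_prod_stable E' hE' (Finset.mem_range.1 hi).le]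
    rw [h1]
    refine le_trans ?_ (hK n)
    rw [← (hPA' n).2]
    exact (hPA' n).1.of_norm.sum_le_tsum _ (fun i _ => mul_nonneg (hnn n i) (by positivity))
  have hle : ∀ D i, ‖PowerSeries.coeff i (∏ d ∈ Finset.Icc 1 D, E d) * x ^ i‖ ≤ b i := by
    intro D i
    rw [norm_mul, Real.norm_eq_abs, Real.norm_of_nonneg (by positivity : 0 ≤ x ^ i)]
    refine mul_le_mul_of_nonneg_right ((hPM D i).trans ?_) (by positivity)
    rcases le_total D i with h | h
    · exact coeff_prod_mono E' hE' hM' h i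
    · rw [coeff_prod_stable E' hE' h]
  refine ⟨Summable.of_nonneg_of_le (fun _ => norm_nonneg _) (fun i => hle i i) hsb, ?_⟩
  have := tendsto_tsum_of_dominated_convergence (𝓕 := Filter.atTop) (bound := b)
    (f := fun D i => PowerSeries.coeff i (∏ d ∈ Finset.Icc 1 D, E d) * x ^ i)
    (g := fun i => PowerSeries.coeff i (∏ d ∈ Finset.Icc 1 i, E d) * x ^ i) hsb ?_ ?_
  · refine this.congr fun D => (hPA D).2
  · intro i
    refine tendsto_const_nhds.congr' ?_
    filter_upwards [Filter.eventually_ge_atTop i] with D hD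
    rw [coeff_prod_stable E hE hD]
  · exact Filter.Eventually.of_forall fun D i => hle D i

lemma choose_bounds (r j : ℕ) :
    (j : ℝ) ^ r / r.factorial ≤ ((r + j).choose r : ℝ) ∧
    ((r + j).choose r : ℝ) ≤ ((r : ℝ) + j) ^ r / r.factorial := by
  constructor
  · have := Nat.pow_le_choose (α := ℝ) r (r + j)
    refine le_trans ?_ this
    gcongr
    have : r + j + 1 - r = j + 1 := by omega
    rw [this]; norm_num
  · have := Nat.choose_le_pow_div (α := ℝ) r (r + j)
    push_cast at this
    exact this

lemma tendsto_choose (r i : ℕ) :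
    Filter.Tendsto (fun m : ℕ => ((r + (m - i)).choose r : ℝ) / (m : ℝ) ^ r) Filter.atTop
      (nhds ((r.factorial : ℝ)⁻¹)) := by
  have aux : ∀ a : ℝ, Filter.Tendsto (fun m : ℕ => (((m : ℝ) + a) / m) ^ r / r.factorial)
      Filter.atTop (nhds ((r.factorial : ℝ)⁻¹)) := by
    intro a
    have h1 : Filter.Tendsto (fun m : ℕ => ((m : ℝ) + a) / m) Filter.atTop (nhds 1) := by
      have h2 : Filter.Tendsto (fun m : ℕ => 1 + a / (m : ℝ)) Filter.atTop (nhds (1 + 0)) :=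
        tendsto_const_nhds.add (tendsto_const_div_atTop_nhds_zero_nat a)
      rw [add_zero] at h2
      refine h2.congr' ?_
      filter_upwards [Filter.eventually_ge_atTop 1] with m hm
      have : (m : ℝ) ≠ 0 := by positivity
      field_simp
    have h3 := (h1.pow r).div_const (r.factorial : ℝ)
    rwa [one_pow, one_div] at h3
  refine tendsto_of_tendsto_of_tendsto_of_le_of_le' (aux (-(i:ℝ))) (aux (r - i)) ?_ ?_
  · filter_upwards [Filter.eventually_ge_atTop i] with m hm
    have := (choose_bounds r (m - i)).1
    rw [Nat.cast_sub hm] at this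
    calc _ = ((m:ℝ) - i) ^ r / r.factorial / (m : ℝ) ^ r := by
          rw [div_pow, div_right_comm, ← sub_eq_add_neg]
      _ ≤ _ := by gcongr
  · filter_upwards [Filter.eventually_ge_atTop i] with m hm
    have := (choose_bounds r (m - i)).2
    rw [Nat.cast_sub hm] at this
    calc _ ≤ ((r:ℝ) + (m - i)) ^ r / r.factorial / (m : ℝ) ^ r := by gcongr
      _ = _ := by
          rw [div_pow, div_right_comm]
          congr 3; ring

lemma tannery_conv (r : ℕ) (a : ℕ → ℝ) (ha : Summable (fun i => ‖a i‖)) :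
    Filter.Tendsto (fun m : ℕ => (∑ p ∈ Finset.HasAntidiagonal.antidiagonal m, a p.1 * ((r + p.2).choose r : ℝ))
      / (m : ℝ) ^ r) Filter.atTop (nhds ((∑' i, a i) * (r.factorial : ℝ)⁻¹)) := by
  have h := tendsto_tsum_of_dominated_convergence (𝓕 := Filter.atTop)
    (bound := fun i => ‖a i‖ * (1 + r) ^ r)
    (f := fun (m : ℕ) i => if i ≤ m then a i * (((r + (m - i)).choose r : ℝ) / (m : ℝ) ^ r) else 0)
    (g := fun i => a i * (r.factorial : ℝ)⁻¹) (ha.mul_right _) ?_ ?_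
  · rw [tsum_mul_right] at h
    refine h.congr fun m => ?_
    rw [tsum_eq_sum (s := Finset.range (m+1)),
      Finset.Nat.sum_antidiagonal_eq_sum_range_succ_mk, Finset.sum_div]
    · refine Finset.sum_congr rfl fun i hi => ?_
      rw [if_pos (Nat.lt_succ_iff.1 (Finset.mem_range.1 hi)), mul_div_assoc]
    · intro i hi
      rw [if_neg]
      simpa using hi
  · intro i
    refine ((tendsto_choose r i).const_mul (a i)).congr' ?_
    filter_upwards [Filter.eventually_ge_atTop i] with m hm
    rw [if_pos hm]
  · filter_upwards [Filter.eventually_ge_atTop 1] with m hm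
    intro i
    split_ifs with him
    · rw [norm_mul]
      refine mul_le_mul_of_nonneg_left ?_ (norm_nonneg _)
      rw [Real.norm_of_nonneg (by positivity)]
      have hm0 : (1:ℝ) ≤ m := by exact_mod_cast hm
      rw [div_le_iff₀ (by positivity), ← mul_pow]
      refine (choose_bounds r (m - i)).2.trans ?_
      refine (div_le_self (by positivity) (by exact_mod_cast Nat.factorial_pos r)).trans ?_
      gcongr
      have : ((m - i : ℕ) : ℝ) ≤ m := by exact_mod_cast Nat.sub_le m i
      nlinarith [(Nat.cast_nonneg r : (0:ℝ) ≤ r)]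
    · rw [norm_zero]; positivity


section piqBounds
variable (F : Type*) [Field F] [Fintype F]

lemma piq_le (n : ℕ) (hn : n ≠ 0) : n * piq F n ≤ Fintype.card F ^ n := by
  rw [← sum_div_piq F n hn]
  exact Finset.single_le_sum (f := fun d => d * piq F d) (fun _ _ => Nat.zero_le _)
    (Nat.mem_divisors_self n hn)

lemma geom_sum_le_two (q N : ℕ) (hq : 2 ≤ q) : ∑ d ∈ Finset.range (N + 1), q ^ d ≤ 2 * q ^ N := by
  induction N with
  | zero => simp
  | succ N ih =>
    rw [Finset.sum_range_succ, pow_succ]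
    nlinarith [pow_pos (show 0 < q by omega) N]

lemma le_piq (n : ℕ) (hn : n ≠ 0) :
    Fintype.card F ^ n ≤ n * piq F n + 2 * Fintype.card F ^ (n / 2) := by
  have hq : 2 ≤ Fintype.card F := Fintype.one_lt_card
  rw [← sum_div_piq F n hn, ← Nat.insert_self_properDivisors hn,
    Finset.sum_insert Nat.self_notMem_properDivisors]
  refine Nat.add_le_add_left ?_ _
  refine le_trans ?_ (geom_sum_le_two _ (n/2) hq)
  have hsub : n.properDivisors ⊆ Finset.range (n / 2 + 1) := by
    intro d hd
    rw [Nat.mem_properDivisors] at hd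
    obtain ⟨⟨k, rfl⟩, h2⟩ := hd
    have hk : 2 ≤ k := by
      by_contra h
      have : k ≤ 1 := by omega
      have := Nat.mul_le_mul_left d this
      omega
    rw [Finset.mem_range, Nat.lt_succ_iff, Nat.le_div_iff_mul_le (by norm_num)]
    exact Nat.mul_le_mul_left d hk
  refine (Finset.sum_le_sum fun d hd => ?_).trans
    (Finset.sum_le_sum_of_subset hsub)
  apply piq_le
  rintro rfl
  rw [Nat.mem_properDivisors] at hd
  exact hn (Nat.zero_dvd.1 hd.1)

lemma piq_one : piq F 1 = Fintype.card F := by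
  have := sum_div_piq F 1 one_ne_zero
  simpa using this

end piqBounds

section Ana
variable (F : Type*) [Field F] [Fintype F] (x y : ℝ) 

lemma piq_x_le (hx : x = (Fintype.card F : ℝ)⁻¹) (n : ℕ) (hn : 1 ≤ n) :
    (piq F n : ℝ) * x ^ n ≤ 1 / n := by
  have hq : (0:ℝ) < Fintype.card F := by exact_mod_cast Fintype.card_pos
  have h : ((n * piq F n : ℕ) : ℝ) ≤ ((Fintype.card F ^ n : ℕ) : ℝ) := by
    exact_mod_cast piq_le F n (by omega)
  push_cast at h
  have hn' : (0:ℝ) < n := by exact_mod_cast hn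
  rw [hx, inv_pow, ← div_eq_mul_inv, div_le_div_iff₀ (by positivity) hn']
  linarith

lemma le_piq_x (hx : x = (Fintype.card F : ℝ)⁻¹) (hy : 0 ≤ y) (hyx : y ^ 2 = x)
    (n : ℕ) (hn : 1 ≤ n) :
    1 / (n : ℝ) - 2 * y ^ n ≤ (piq F n : ℝ) * x ^ n := by
  have hq : (0:ℝ) < Fintype.card F := by exact_mod_cast Fintype.card_pos
  have hq1 : (1:ℝ) ≤ Fintype.card F := by exact_mod_cast Fintype.card_pos
  have h : ((Fintype.card F ^ n : ℕ) : ℝ) ≤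
      ((n * piq F n + 2 * Fintype.card F ^ (n / 2) : ℕ) : ℝ) := by
    exact_mod_cast le_piq F n (by omega)
  push_cast at h
  have hn' : (1:ℝ) ≤ n := by exact_mod_cast hn
  have hx0 : 0 < x := by rw [hx]; positivity
  have hqx : (Fintype.card F : ℝ) * x = 1 := by rw [hx]; field_simp
  have hx1 : x ≤ 1 := by rw [hx]; exact inv_le_one_of_one_le₀ hq1
  have hy1 : y ≤ 1 := by nlinarith
  have h2 := mul_le_mul_of_nonneg_right h (pow_nonneg hx0.le n)
  rw [← mul_pow, hqx, one_pow] at h2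
  have h3 : (Fintype.card F : ℝ) ^ (n / 2) * x ^ n ≤ y ^ n := by
    have : x ^ n = x ^ (n / 2) * x ^ (n - n / 2) := by
      rw [← pow_add]; congr 1; omega
    rw [this, ← mul_assoc, ← mul_pow, hqx, one_pow, one_mul, ← hyx, ← pow_mul]
    exact pow_le_pow_of_le_one hy hy1 (by omega)
  have h4 : 1 - 2 * y ^ n ≤ n * (piq F n * x ^ n) := by nlinarith
  have h5 : (1 - 2 * y ^ n) / n ≤ piq F n * x ^ n := by
    rw [div_le_iff₀ (by linarith)]; linarith
  refine le_trans ?_ h5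
  rw [sub_div]
  have : 2 * y ^ n / n ≤ 2 * y ^ n := div_le_self (by positivity) hn'
  linarith

/-- `|q π(d) - π(d+1)|` -/
noncomputable def tdef (d : ℕ) : ℕ :=
  (Fintype.card F * piq F d - piq F (d + 1)) + (piq F (d + 1) - Fintype.card F * piq F d)

lemma tdef_le (hx : x = (Fintype.card F : ℝ)⁻¹) (hy : 0 ≤ y) (hyx : y ^ 2 = x)
    (d : ℕ) (hd : 1 ≤ d) :
    (tdef F d : ℝ) * x ^ d ≤
      (Fintype.card F : ℝ) * ((1 / (d : ℝ) - 1 / ((d + 1 : ℕ) : ℝ)) + 4 * y ^ d) := by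
  set q : ℝ := ((Fintype.card F : ℕ) : ℝ) with hqdef
  have hq : (0:ℝ) < q := by rw [hqdef]; exact_mod_cast Fintype.card_pos
  have hq1 : (1:ℝ) ≤ q := by rw [hqdef]; exact_mod_cast Fintype.card_pos
  have hx0 : 0 < x := by rw [hx]; positivity
  have hqx : q * x = 1 := by rw [hx]; field_simp
  have hx1 : x ≤ 1 := by rw [hx]; exact inv_le_one_of_one_le₀ hq1
  have hy1 : y ≤ 1 := by nlinarith
  have ht : (tdef F d : ℝ) = |q * piq F d - piq F (d+1)| := by
    unfold tdef
    rcases le_total (Fintype.card F * piq F d) (piq F (d + 1)) with h | h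
    · rw [Nat.sub_eq_zero_of_le h, zero_add, Nat.cast_sub h, abs_of_nonpos]
      · push_cast; ring
      · have : ((Fintype.card F * piq F d : ℕ) : ℝ) ≤ (piq F (d + 1) : ℕ) := by exact_mod_cast h
        push_cast at this; linarith
    · rw [Nat.sub_eq_zero_of_le h, add_zero, Nat.cast_sub h, abs_of_nonneg]
      · push_cast; ring
      · have : (piq F (d + 1) : ℝ) ≤ (Fintype.card F * piq F d : ℕ) := by exact_mod_cast h
        push_cast at this; linarith
  have e1 : (tdef F d : ℝ) * x ^ d = q * |piq F d * x ^ d - piq F (d+1) * x ^ (d+1)| := by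
    rw [ht, ← abs_of_pos (pow_pos hx0 d), ← abs_mul, abs_of_pos (pow_pos hx0 d)]
    conv_rhs => rw [← abs_of_pos hq, ← abs_mul]
    congr 1
    try rw [abs_of_pos hq]
    rw [pow_succ]
    linear_combination (- (piq F (d+1) : ℝ) * x ^ d + 2 * (piq F (d+1) : ℝ) * x ^ d) * hqx
  rw [e1]
  refine mul_le_mul_of_nonneg_left ?_ hq.le
  have a1 := piq_x_le F x hx d hd
  have a2 := le_piq_x F x y hx hy hyx d hd
  have b1 := piq_x_le F x hx (d+1) (by omega)
  have b2 := le_piq_x F x y hx hy hyx (d+1) (by omega)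
  have c1 : y ^ (d+1) ≤ y ^ d := pow_le_pow_of_le_one hy hy1 (by omega)
  have c2 : 0 ≤ y ^ d := by positivity
  have c3 : 1 / ((d + 1 : ℕ) : ℝ) ≤ 1 / (d : ℝ) := by
    apply one_div_le_one_div_of_le
    · exact_mod_cast hd
    · push_cast; linarith
  rw [abs_le]
  constructor <;> linarith

lemma inv_one_sub_le_exp (z c : ℝ) (hz : 0 ≤ z) (hz1 : z < 1) (hc : 1 ≤ c * (1 - z)) :
    (1 - z)⁻¹ ≤ Real.exp (c * z) := by
  have h := Real.add_one_le_exp (c * z)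
  refine le_trans ?_ h
  rw [inv_le_iff_one_le_mul₀ (by linarith)]
  nlinarith

lemma sum_tele (D : ℕ) : ∑ d ∈ Finset.Icc 1 D, (1 / (d : ℝ) - 1 / ((d + 1 : ℕ) : ℝ)) ≤ 1 := by
  have : ∑ d ∈ Finset.Icc 1 D, (1 / (d : ℝ) - 1 / ((d + 1 : ℕ) : ℝ)) = 1 - 1 / ((D + 1 : ℕ) : ℝ) := by
    induction D with
    | zero => simp
    | succ D ih => rw [Finset.sum_Icc_succ_top (by omega), ih]; ring
  rw [this]
  have : (0:ℝ) ≤ 1 / ((D + 1 : ℕ) : ℝ) := by positivity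
  linarith

lemma prod_e'_bdd (hx : x = (Fintype.card F : ℝ)⁻¹) :
    ∃ K : ℝ, ∀ D, ∏ d ∈ Finset.Icc 1 D, ((1 - 1 * x ^ d)⁻¹) ^ tdef F d ≤ K := by
  set q : ℝ := ((Fintype.card F : ℕ) : ℝ) with hqdef
  have hq2 : (2:ℝ) ≤ q := by rw [hqdef]; exact_mod_cast Fintype.one_lt_card
  have hx0 : 0 < x := by rw [hx]; positivity
  have hx2 : x ≤ 1 / 2 := by
    rw [hx, inv_eq_one_div]; exact one_div_le_one_div_of_le (by norm_num) hq2
  obtain ⟨y, hy, hyx⟩ : ∃ y : ℝ, 0 ≤ y ∧ y ^ 2 = x := ⟨√x, Real.sqrt_nonneg x, Real.sq_sqrt hx0.le⟩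
  have hy1 : y < 1 := by nlinarith
  refine ⟨Real.exp (2 * (q * (1 + 4 * ∑' d, y ^ d))), fun D => ?_⟩
  have hb : ∀ d ∈ Finset.Icc 1 D, ((1 - 1 * x ^ d)⁻¹) ^ tdef F d ≤
      Real.exp (2 * (q * ((1 / (d : ℝ) - 1 / ((d + 1 : ℕ) : ℝ)) + 4 * y ^ d))) := by
    intro d hd
    have hd1 := (Finset.mem_Icc.1 hd).1
    have hxd : x ^ d ≤ 1 / 2 := (pow_le_of_le_one hx0.le (by linarith) (by omega)).trans hx2
    have hxd0 : 0 < x ^ d := by positivity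
    have h1 := inv_one_sub_le_exp (x ^ d) 2 hxd0.le (by linarith) (by linarith)
    rw [one_mul]
    have h2 : 0 ≤ (1 - x ^ d)⁻¹ := inv_nonneg.2 (by linarith)
    refine (pow_le_pow_left₀ h2 h1 _).trans ?_
    rw [← Real.exp_nat_mul]
    apply Real.exp_le_exp.2
    have := tdef_le F x y hx hy hyx d hd1
    linarith
  refine (Finset.prod_le_prod (fun d hd => ?_) hb).trans ?_
  · have hd1 := (Finset.mem_Icc.1 hd).1
    have hxd : x ^ d ≤ 1 / 2 := (pow_le_of_le_one hx0.le (by linarith) (by omega)).trans hx2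
    apply pow_nonneg
    apply inv_nonneg.2
    linarith
  · rw [← Real.exp_sum]
    apply Real.exp_le_exp.2
    rw [← Finset.mul_sum, ← Finset.mul_sum, Finset.sum_add_distrib, ← Finset.mul_sum]
    have h1 := sum_tele D
    have h2 : ∑ d ∈ Finset.Icc 1 D, y ^ d ≤ ∑' d, y ^ d :=
      (summable_geometric_of_lt_one hy hy1).sum_le_tsum _ (fun _ _ => by positivity)
    have hq0 : 0 ≤ q := by linarith
    gcongr

end Ana

lemma pow_split {R : Type*} [CommMonoid R] {o g : R} (h : o * g = 1) (a b : ℕ) :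
    g ^ b = o ^ (a - b) * g ^ (b - a) * g ^ a := by
  rcases le_total a b with hab | hab
  · rw [Nat.sub_eq_zero_of_le hab, pow_zero, one_mul, ← pow_add]
    congr 1; omega
  · rw [Nat.sub_eq_zero_of_le hab, pow_zero, mul_one]
    obtain ⟨c, rfl⟩ := Nat.exists_eq_add_of_le hab
    rw [Nat.add_sub_cancel_left, pow_add g b c]
    calc g ^ b = (o * g) ^ c * g ^ b := by rw [h, one_pow, one_mul]
      _ = _ := by rw [mul_pow]; ac_rfl

section Hser
variable (F : Type*) [Field F] [Fintype F]

noncomputable def Eser (d : ℕ) : PowerSeries ℝ :=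
  (1 - PowerSeries.X ^ d) ^ (Fintype.card F * piq F d - piq F (d + 1)) *
    geo 1 d ^ (piq F (d + 1) - Fintype.card F * piq F d)

noncomputable def eval_e (x : ℝ) (d : ℕ) : ℝ :=
  (1 - x ^ d) ^ (Fintype.card F * piq F d - piq F (d + 1)) *
    ((1 - 1 * x ^ d)⁻¹) ^ (piq F (d + 1) - Fintype.card F * piq F d)

noncomputable def hser (i : ℕ) : ℝ := PowerSeries.coeff i (∏ d ∈ Finset.Icc 1 i, Eser F d)

lemma Eser_dvd (d : ℕ) (hd : 1 ≤ d) : PowerSeries.X ^ d ∣ Eser F d - 1 := by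
  apply dvd_mul_sub_one
  · apply dvd_pow_sub_one
    exact ⟨-1, by ring⟩
  · exact dvd_pow_sub_one (dvd_geo_sub_one hd) _

lemma H_facts (x : ℝ) (hx : x = (Fintype.card F : ℝ)⁻¹) :
    Summable (fun i => ‖hser F i * x ^ i‖) ∧
    Filter.Tendsto (fun D => ∏ d ∈ Finset.Icc 1 D, eval_e F x d) Filter.atTop
      (nhds (∑' i, hser F i * x ^ i)) := by
  obtain ⟨K, hK⟩ := prod_e'_bdd F x hx
  have hq2 : (2:ℝ) ≤ Fintype.card F := by exact_mod_cast Fintype.one_lt_card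
  have hx0 : 0 < x := by rw [hx]; positivity
  have hx2 : x ≤ 1 / 2 := by
    rw [hx, inv_eq_one_div]; exact one_div_le_one_div_of_le (by norm_num) hq2
  have hxd : ∀ d, 1 ≤ d → 1 * x ^ d < 1 := by
    intro d hd
    rw [one_mul]
    exact pow_lt_one₀ hx0.le (by linarith) (by omega)
  refine tannery_H x hx0.le (Eser F) (fun d => geo 1 d ^ tdef F d) (eval_e F x)
    (fun d => ((1 - 1 * x ^ d)⁻¹) ^ tdef F d) K (Eser_dvd F)
    (fun d hd => dvd_pow_sub_one (dvd_geo_sub_one hd) _) ?_ 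
    (fun d hd => (Maj.geo_self zero_le_one d).pow _) ?_
    (fun d hd => (AbsSum.geo hx0.le zero_le_one hd (hxd d hd)).pow _) hK
  · intro d hd
    simp only [tdef, pow_add]
    exact ((Maj.one_sub hd).pow _).mul ((Maj.geo_self zero_le_one d).pow _)
  · intro d hd
    exact (((AbsSum.one x).sub (AbsSum.X_pow x d)).pow _).mul
      ((AbsSum.geo hx0.le zero_le_one hd (hxd d hd)).pow _)

lemma coeff_geom_pow (q r m : ℕ) :
    PowerSeries.coeff m ((PowerSeries.mk fun i => (q : ℝ) ^ i) ^ (r + 1)) =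
      (q : ℝ) ^ m * ((r + m).choose r : ℝ) := by
  have : (PowerSeries.mk fun i => (q : ℝ) ^ i) = PowerSeries.rescale (q : ℝ) (PowerSeries.mk 1) := by
    ext i
    simp
  rw [this, ← map_pow, PowerSeries.mk_one_pow_eq_mk_choose_add, PowerSeries.coeff_rescale,
    PowerSeries.coeff_mk]

lemma g_formula (x : ℝ) (hx : x = (Fintype.card F : ℝ)⁻¹) (r : ℕ) (hr : r + 1 = Fintype.card F)
    (m : ℕ) :
    PowerSeries.coeff m (∏ d ∈ Finset.Icc 1 m, geo 1 d ^ (piq F (d + 1))) * x ^ m =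
      ∑ p ∈ Finset.HasAntidiagonal.antidiagonal m,
        (hser F p.1 * x ^ p.1) * ((r + p.2).choose r : ℝ) := by
  have h1 : ∏ d ∈ Finset.Icc 1 m, geo 1 d ^ (piq F (d + 1)) =
      (∏ d ∈ Finset.Icc 1 m, Eser F d) *
        (∏ d ∈ Finset.Icc 1 m, geo 1 d ^ piq F d) ^ (r + 1) := by
    rw [← Finset.prod_pow, ← Finset.prod_mul_distrib]
    refine Finset.prod_congr rfl fun d hd => ?_
    rw [pow_split (one_sub_mul_geo (Finset.mem_Icc.1 hd).1) (Fintype.card F * piq F d), Eser,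
      ← pow_mul, hr, mul_comm (piq F d)]
  have hq0 : (Fintype.card F : ℝ) ≠ 0 := by exact_mod_cast Fintype.card_ne_zero
  have h2 : ∀ i ≤ m, PowerSeries.coeff i ((∏ d ∈ Finset.Icc 1 m, geo 1 d ^ piq F d) ^ (r + 1)) =
      PowerSeries.coeff i ((PowerSeries.mk fun i => (Fintype.card F : ℝ) ^ i) ^ (r + 1)) := by
    apply coeff_congr_pow
    intro i hi
    rw [euler_one F i m hi, PowerSeries.coeff_mk]
  rw [h1, coeff_mul_pow]
  refine Finset.sum_congr rfl fun p hp => ?_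
  have hpm := Finset.HasAntidiagonal.mem_antidiagonal.1 hp
  rw [h2 _ (by omega), coeff_geom_pow, coeff_prod_stable (Eser F) (Eser_dvd F) (by omega : p.1 ≤ m)]
  have : (Fintype.card F : ℝ) ^ p.2 * x ^ p.2 = 1 := by
    rw [hx, ← mul_pow, mul_inv_cancel₀ hq0, one_pow]
  rw [hser]
  linear_combination (PowerSeries.coeff p.1 (∏ d ∈ Finset.Icc 1 p.1, Eser F d) * x ^ p.1 *
    ((r + p.2).choose r : ℝ)) * this

lemma g_asymp (x : ℝ) (hx : x = (Fintype.card F : ℝ)⁻¹) (r : ℕ) (hr : r + 1 = Fintype.card F) :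
    Filter.Tendsto (fun m : ℕ => PowerSeries.coeff m (∏ d ∈ Finset.Icc 1 m,
      geo 1 d ^ (piq F (d + 1))) * x ^ m / (m : ℝ) ^ r) Filter.atTop
      (nhds ((∑' i, hser F i * x ^ i) * (r.factorial : ℝ)⁻¹)) := by
  refine (tannery_conv r _ (H_facts F x hx).1).congr fun m => ?_
  rw [g_formula F x hx r hr]

end Hser


section Vid
variable (F : Type*) [Field F] [Fintype F]

/-- local Euler factor -/
noncomputable def ufac (q d : ℕ) : ℝ :=
  (1 - ((q : ℝ) ^ (d - 1))⁻¹)⁻¹ * (1 - ((q : ℝ) ^ d)⁻¹) ^ (q : ℕ)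

lemma ufac_bounds (q d : ℕ) (hq : 2 ≤ q) (hd : 2 ≤ d) :
    1 ≤ ufac q d ∧ ufac q d - 1 ≤ 2 * (q : ℝ) ^ 2 * ((q : ℝ)⁻¹ ^ d) ^ 2 := by
  have hq' : (2:ℝ) ≤ q := by exact_mod_cast hq
  have hq0 : (0:ℝ) < q := by linarith
  obtain ⟨e, rfl⟩ : ∃ e, d = e + 1 := ⟨d - 1, by omega⟩
  have he : 1 ≤ e := by omega
  set x : ℝ := (q : ℝ)⁻¹ with hx
  have hqx : (q : ℝ) * x = 1 := mul_inv_cancel₀ hq0.ne'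
  have hx0 : 0 < x := by rw [hx]; positivity
  have hx2 : x ≤ 1 / 2 := by
    rw [hx, inv_eq_one_div]; exact one_div_le_one_div_of_le (by norm_num) hq'
  unfold ufac
  rw [Nat.add_sub_cancel, ← inv_pow, ← inv_pow, ← hx]
  set y : ℝ := x ^ (e + 1) with hy
  have hqy : x ^ e = q * y := by
    rw [hy, pow_succ]; linear_combination (- x ^ e) * hqx
  have hy0 : 0 < y := by positivity
  have hxe : x ^ e ≤ 1 / 2 := (pow_le_of_le_one hx0.le (by linarith) (by omega)).trans hx2
  have hxe0 : 0 < x ^ e := by positivity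
  have hy1 : y ≤ 1 := by nlinarith
  rw [hqy] at hxe hxe0 ⊢
  have b1 := one_add_mul_le_pow (show (-2:ℝ) ≤ -y by linarith) q
  have b2 := one_add_mul_le_pow (show (-2:ℝ) ≤ y by linarith) q
  have b3 : (1 - y) ^ q * (1 + y) ^ q ≤ 1 := by
    rw [← mul_pow]
    apply pow_le_one₀
    · nlinarith
    · nlinarith
  have hp : 0 < 1 - q * y := by linarith
  have b4 : (1 + -y) = 1 - y := by ring
  rw [b4] at b1
  have hA : 0 ≤ (1 - y) ^ q := pow_nonneg (by linarith) _
  constructor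
  · rw [inv_mul_eq_div, le_div_iff₀ hp]; linarith
  · have b5 : (1 - y) ^ q * (1 + q * y) ≤ 1 := by nlinarith
    have b6 : (1 - q * y)⁻¹ * (1 - y) ^ q ≤ 1 + 2 * (q * y) ^ 2 := by
      rw [inv_mul_eq_div, div_le_iff₀ hp]
      have h1 : 0 < 1 + q * y := by linarith
      set w := (q : ℝ) * y
      have h2 : 1 ≤ (1 + 2 * w ^ 2) * (1 - w) * (1 + w) := by
        have : w ^ 2 ≤ 1 / 4 := by nlinarith
        nlinarith [sq_nonneg w]
      exact le_of_mul_le_mul_right (b5.trans h2) h1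
    nlinarith

lemma summable_Irr2 (x : ℝ) (hx : x = (Fintype.card F : ℝ)⁻¹) :
    Summable (fun p : Irr2 F => (x ^ p.1.natDegree) ^ 2) := by
  have hq2 : (2:ℝ) ≤ Fintype.card F := by exact_mod_cast Fintype.one_lt_card
  have hx0 : 0 < x := by rw [hx]; positivity
  have hx2 : x ≤ 1 / 2 := by
    rw [hx, inv_eq_one_div]; exact one_div_le_one_div_of_le (by norm_num) hq2
  refine summable_of_sum_le (c := ∑' d : ℕ, x ^ d) (fun _ => by positivity) fun s => ?_
  classical
  rw [← Finset.sum_fiberwise_of_maps_to (t := Finset.range (s.sup (fun i => i.1.natDegree) + 1))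
    (g := fun i : Irr2 F => i.1.natDegree)]
  · refine le_trans (Finset.sum_le_sum (g := fun d => x ^ d) fun d _ => ?_)
      ((summable_geometric_of_lt_one hx0.le (by linarith)).sum_le_tsum _
        (fun _ _ => by positivity))
    have e1 : ∑ i ∈ s with i.1.natDegree = d, (x ^ i.1.natDegree) ^ 2 =
        (s.filter (fun i => i.1.natDegree = d)).card * (x ^ d) ^ 2 := by
      rw [← nsmul_eq_mul, ← Finset.sum_const]
      refine Finset.sum_congr rfl fun i hi => ?_
      rw [(Finset.mem_filter.1 hi).2]
    rw [e1]
    rcases lt_or_ge d 2 with h | h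
    · have : s.filter (fun i => i.1.natDegree = d) = ∅ := by
        apply Finset.filter_eq_empty_iff.2
        intro i _ hi
        have := i.2.2.2
        omega
      rw [this]
      simp; positivity
    · have hc : (s.filter (fun i => i.1.natDegree = d)).card ≤ piq F d := by
        rw [← ncard_Irr2 F d h, ← Set.ncard_coe_finset]
        apply Set.ncard_le_ncard
        · intro i hi
          simp at hi
          exact hi.2
        · exact (finite_Irr2 F d).subset (fun i (hi : i.1.natDegree = d) => hi.le)
      have hc' : ((s.filter (fun i => i.1.natDegree = d)).card : ℝ) ≤ piq F d := by
        exact_mod_cast hc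
      have h1 := piq_x_le F x hx d (by omega)
      have h2 : 1 / (d : ℝ) ≤ 1 := by
        rw [div_le_one (by positivity)]
        have : (2:ℝ) ≤ d := by exact_mod_cast h
        linarith
      have h3 : 0 < x ^ d := by positivity
      calc _ ≤ (piq F d : ℝ) * (x ^ d) ^ 2 := by gcongr
        _ = (piq F d * x ^ d) * x ^ d := by ring
        _ ≤ 1 * x ^ d := by
          apply mul_le_mul_of_nonneg_right (h1.trans h2) h3.le
        _ = _ := one_mul _
  · intro i hi
    rw [Finset.mem_range, Nat.lt_succ_iff]
    exact Finset.le_sup (f := fun i : Irr2 F => i.1.natDegree) hi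

lemma mult_Irr2 : Multipliable (fun p : Irr2 F => ufac (Fintype.card F) p.1.natDegree) := by
  have hq : 2 ≤ Fintype.card F := Fintype.one_lt_card
  have h := Real.multipliable_one_add_of_summable
    (f := fun p : Irr2 F => ufac (Fintype.card F) p.1.natDegree - 1) ?_
  · refine h.congr fun p => ?_
    ring
  · refine Summable.of_nonneg_of_le (fun p => ?_) (fun p => ?_)
      ((summable_Irr2 F _ rfl).mul_left (2 * (Fintype.card F : ℝ) ^ 2))
    · have := (ufac_bounds (Fintype.card F) p.1.natDegree hq p.2.2.2).1
      linarith
    · exact (ufac_bounds (Fintype.card F) p.1.natDegree hq p.2.2.2).2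

lemma partial_prod (D : ℕ) :
    ∏ p ∈ (finite_Irr2' F D).toFinset, ufac (Fintype.card F) p.1.natDegree =
      ∏ d ∈ Finset.Icc 1 D, ufac (Fintype.card F) (d + 1) ^ piq F (d + 1) := by
  classical
  rw [← Finset.prod_fiberwise_of_maps_to (t := Finset.Icc 1 D)
    (g := fun i : Irr2 F => i.1.natDegree - 1)]
  · refine Finset.prod_congr rfl fun d hd => ?_
    have hd := Finset.mem_Icc.1 hd
    rw [← ncard_Irr2' F d hd.1]
    have : {i : Irr2 F | i.1.natDegree - 1 = d} =
        ((finite_Irr2' F D).toFinset.filter (fun i => i.1.natDegree - 1 = d) : Finset (Irr2 F)) := by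
      ext i
      simp
      omega
    rw [this, Set.ncard_coe_finset, ← Finset.prod_const]
    refine Finset.prod_congr rfl fun i hi => ?_
    have h1 := (Finset.mem_filter.1 hi).2
    congr 1
    omega
  · intro i hi
    have := i.2.2.2
    simp at hi ⊢
    omega

lemma prod_identity (x : ℝ) (hx : x = (Fintype.card F : ℝ)⁻¹) (D : ℕ) :
    (∏ d ∈ Finset.Icc 1 D, ufac (Fintype.card F) (d + 1) ^ piq F (d + 1)) *
      (1 - x) ^ (Fintype.card F ^ 2) =
    (∏ d ∈ Finset.Icc 1 D, eval_e F x d) *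
      (1 - x ^ (D + 1)) ^ (Fintype.card F * piq F (D + 1)) := by
  have hq2 : (2:ℝ) ≤ Fintype.card F := by exact_mod_cast Fintype.one_lt_card
  have hx0 : 0 < x := by rw [hx]; positivity
  have hx2 : x ≤ 1 / 2 := by
    rw [hx, inv_eq_one_div]; exact one_div_le_one_div_of_le (by norm_num) hq2
  induction D with
  | zero => simp [piq_one, sq]
  | succ D ih =>
    rw [Finset.prod_Icc_succ_top (by omega), Finset.prod_Icc_succ_top (by omega)]
    have hz : (1 - x ^ (D + 1)) ≠ 0 := by
      have := pow_lt_one₀ hx0.le (by linarith : x < 1) (n := D + 1) (by omega)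
      linarith
    have hs := pow_split (mul_inv_cancel₀ hz) (Fintype.card F * piq F (D + 1)) (piq F (D + 1 + 1))
    have hu : ufac (Fintype.card F) (D + 1 + 1) = (1 - x ^ (D + 1))⁻¹ *
        (1 - x ^ (D + 1 + 1)) ^ (Fintype.card F) := by
      unfold ufac
      rw [Nat.add_sub_cancel, ← inv_pow, ← inv_pow, ← hx]
    have hee : eval_e F x (D + 1) = ((1 - x ^ (D + 1))⁻¹) ^ (piq F (D + 1 + 1)) *
        (1 - x ^ (D + 1)) ^ (Fintype.card F * piq F (D + 1)) := by
      rw [hs, eval_e, one_mul, mul_assoc _ (_ ^ (Fintype.card F * piq F (D + 1))), ← mul_pow,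
        inv_mul_cancel₀ hz, one_pow, mul_one]
    rw [mul_right_comm, ih, hee, hu, mul_pow, ← pow_mul]
    ring

lemma V_tendsto_aux (x : ℝ) (hx : x = (Fintype.card F : ℝ)⁻¹) :
    Filter.Tendsto (fun D : ℕ => (1 - x ^ (D + 1)) ^ (Fintype.card F * piq F (D + 1)))
      Filter.atTop (nhds 1) := by
  have hq2 : (2:ℝ) ≤ Fintype.card F := by exact_mod_cast Fintype.one_lt_card
  have hx0 : 0 < x := by rw [hx]; positivity
  have hx2 : x ≤ 1 / 2 := by
    rw [hx, inv_eq_one_div]; exact one_div_le_one_div_of_le (by norm_num) hq2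
  have hl : Filter.Tendsto (fun D : ℕ => 1 - (Fintype.card F : ℝ) * (1 / ((D : ℝ) + 1)))
      Filter.atTop (nhds 1) := by
    have := (tendsto_one_div_add_atTop_nhds_zero_nat (𝕜 := ℝ)).const_mul (Fintype.card F : ℝ)
    have := this.const_sub 1
    simpa using this
  refine tendsto_of_tendsto_of_tendsto_of_le_of_le hl tendsto_const_nhds ?_ ?_
  · intro D
    have h0 : x ^ (D + 1) < 1 := pow_lt_one₀ hx0.le (by linarith : x < 1) (by omega)
    have b := one_add_mul_le_pow (show (-2:ℝ) ≤ -x ^ (D + 1) by linarith)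
      (Fintype.card F * piq F (D + 1))
    have h1 := piq_x_le F x hx (D + 1) (by omega)
    show _ ≤ (1 - x ^ (D + 1)) ^ (Fintype.card F * piq F (D + 1))
    rw [sub_eq_add_neg 1 (x ^ (D + 1))]
    refine le_trans ?_ b
    push_cast at h1 ⊢
    nlinarith
  · intro D
    have h0 : x ^ (D + 1) < 1 := pow_lt_one₀ hx0.le (by linarith : x < 1) (by omega)
    have h1 : 0 < x ^ (D + 1) := by positivity
    exact pow_le_one₀ (by linarith) (by linarith)

lemma V_eq (x : ℝ) (hx : x = (Fintype.card F : ℝ)⁻¹) :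
    ∑' i, hser F i * x ^ i = (1 - x) ^ (Fintype.card F ^ 2) *
      ∏' p : Irr2 F, ufac (Fintype.card F) p.1.natDegree := by
  have hS : Filter.Tendsto (fun D => (finite_Irr2' F D).toFinset) Filter.atTop Filter.atTop := by
    apply Filter.tendsto_atTop_finset_of_monotone
    · intro a b hab i hi
      simp at hi ⊢
      omega
    · intro i
      exact ⟨i.1.natDegree, by simp⟩
  have h1 := ((mult_Irr2 F).hasProd.comp hS).mul_const ((1 - x) ^ (Fintype.card F ^ 2))
  have h2 := (H_facts F x hx).2.mul (V_tendsto_aux F x hx)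
  rw [mul_one] at h2
  rw [mul_comm]
  refine tendsto_nhds_unique h2 (h1.congr fun D => ?_)
  simp only [Function.comp]
  rw [partial_prod, prod_identity F x hx]

lemma V_pos (x : ℝ) (hx : x = (Fintype.card F : ℝ)⁻¹) : 0 < ∑' i, hser F i * x ^ i := by
  have hq2 : (2:ℝ) ≤ Fintype.card F := by exact_mod_cast Fintype.one_lt_card
  have hx2 : x ≤ 1 / 2 := by
    rw [hx, inv_eq_one_div]; exact one_div_le_one_div_of_le (by norm_num) hq2
  rw [V_eq F x hx]
  apply mul_pos (pow_pos (by linarith) _)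
  refine lt_of_lt_of_le one_pos (ge_of_tendsto' (mult_Irr2 F).hasProd fun s => ?_)
  have : ∀ p ∈ s, (1:ℝ) ≤ ufac (Fintype.card F) p.1.natDegree :=
    fun p _ => (ufac_bounds (Fintype.card F) p.1.natDegree Fintype.one_lt_card p.2.2.2).1
  calc (1:ℝ) = ∏ p ∈ s, 1 := by simp
    _ ≤ _ := Finset.prod_le_prod (fun _ _ => zero_le_one) this

lemma Cconst_eq (x : ℝ) (hx : x = (Fintype.card F : ℝ)⁻¹) (r : ℕ) (hr : r + 1 = Fintype.card F) :
    Cconst (Fintype.card F) F = ((r.factorial : ℝ)⁻¹) ^ 2 * ∑' i, hser F i * x ^ i := by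
  rw [V_eq F x hx, Cconst, ← hx, mul_assoc]
  have : Fintype.card F - 1 = r := by omega
  rw [this]
  rfl

end Vid


section Fin
variable (F : Type*) [Field F] [Fintype F]

lemma tail_bound (x : ℝ) (hx : x = (Fintype.card F : ℝ)⁻¹) (hq3 : 3 ≤ Fintype.card F) (m : ℕ)
    (T : Finset (Multiset (Irr2 F)))
    (hT : ∀ s, s ∈ T ↔ (s.map (fun i : Irr2 F => i.1.natDegree - 1)).sum = m) :
    (∑ s ∈ T, (2:ℝ) ^ s.card) * x ^ m ≤ ((m : ℝ) + 1) ^ (6 * Fintype.card F) := by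
  have hw : ∀ i : Irr2 F, 1 ≤ i.1.natDegree - 1 := fun i => by have := i.2.2.2; omega
  have hq3' : (3:ℝ) ≤ Fintype.card F := by exact_mod_cast hq3
  have hx0 : 0 < x := by rw [hx]; positivity
  have hx3 : x ≤ 1 / 3 := by
    rw [hx, inv_eq_one_div]; exact one_div_le_one_div_of_le (by norm_num) hq3'
  have hqx : (Fintype.card F : ℝ) * x = 1 := by rw [hx]; exact mul_inv_cancel₀ (by linarith)
  rw [genfun' _ hw m m le_rfl (finite_Irr2' F m) 2 T hT]
  have hxd : ∀ d, 1 ≤ d → x ^ d ≤ 1 / 3 := fun d hd =>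
    (pow_le_of_le_one hx0.le (by linarith) (by omega)).trans hx3
  have hA : AbsSum x (∏ d ∈ Finset.Icc 1 m,
      geo 2 d ^ (Set.ncard {i : Irr2 F | i.1.natDegree - 1 = d}))
      (∏ d ∈ Finset.Icc 1 m, ((1 - 2 * x ^ d)⁻¹) ^
        (Set.ncard {i : Irr2 F | i.1.natDegree - 1 = d})) := by
    apply AbsSum.prod
    intro d hd
    have hd1 := (Finset.mem_Icc.1 hd).1
    have := hxd d hd1
    exact (AbsSum.geo hx0.le (by norm_num) hd1 (by linarith)).pow _
  have hM : Maj (∏ d ∈ Finset.Icc 1 m,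
      geo 2 d ^ (Set.ncard {i : Irr2 F | i.1.natDegree - 1 = d})) (∏ d ∈ Finset.Icc 1 m,
      geo 2 d ^ (Set.ncard {i : Irr2 F | i.1.natDegree - 1 = d})) :=
    Maj.prod _ fun d _ => (Maj.geo_self (by norm_num) d).pow _
  have h1 := hA.1.of_norm.le_tsum m (fun j _ =>
    mul_nonneg ((abs_nonneg _).trans (hM j)) (pow_nonneg hx0.le j))
  rw [hA.2] at h1
  refine h1.trans ?_
  have h2 : ∀ d ∈ Finset.Icc 1 m, ((1 - 2 * x ^ d)⁻¹) ^
        (Set.ncard {i : Irr2 F | i.1.natDegree - 1 = d}) ≤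
      (((d : ℝ) + 1) / d) ^ (6 * Fintype.card F) := by
    intro d hd
    have hd1 := (Finset.mem_Icc.1 hd).1
    have hd0 : (0:ℝ) < d := by exact_mod_cast hd1
    have hx1 := hxd d hd1
    have hxp : 0 < x ^ d := by positivity
    rw [ncard_Irr2' F d hd1]
    have e1 := inv_one_sub_le_exp (2 * x ^ d) 3 (by positivity) (by linarith) (by linarith)
    have e2 : 0 ≤ (1 - 2 * x ^ d)⁻¹ := inv_nonneg.2 (by linarith)
    refine (pow_le_pow_left₀ e2 e1 _).trans ?_
    rw [← Real.exp_nat_mul]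
    have e3 := piq_x_le F x hx (d + 1) (by omega)
    have e4 : (piq F (d + 1) : ℝ) * (3 * (2 * x ^ d)) =
        ((6 * Fintype.card F : ℕ) : ℝ) * (piq F (d + 1) * x ^ (d + 1)) := by
      push_cast
      rw [pow_succ]
      linear_combination (- 6 * (piq F (d + 1) : ℝ) * x ^ d) * hqx
    rw [e4]
    have e5 : Real.exp (1 / ((d + 1 : ℕ) : ℝ)) ≤ ((d : ℝ) + 1) / d := by
      have h := Real.add_one_le_exp (-(1 / ((d + 1 : ℕ) : ℝ)))
      have h' : -(1 / ((d + 1 : ℕ) : ℝ)) + 1 = d / ((d : ℝ) + 1) := by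
        push_cast; field_simp; ring
      rw [h', Real.exp_neg] at h
      have := inv_anti₀ (by positivity) h
      rwa [inv_inv, inv_div] at this
    calc _ ≤ Real.exp (((6 * Fintype.card F : ℕ) : ℝ) * (1 / ((d + 1 : ℕ) : ℝ))) := by
          apply Real.exp_le_exp.2
          exact mul_le_mul_of_nonneg_left e3 (Nat.cast_nonneg _)
      _ = Real.exp (1 / ((d + 1 : ℕ) : ℝ)) ^ (6 * Fintype.card F) := by rw [Real.exp_nat_mul]
      _ ≤ _ := pow_le_pow_left₀ (Real.exp_pos _).le e5 _
  refine (Finset.prod_le_prod (fun d hd => ?_) h2).trans ?_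
  · have := hxd d (Finset.mem_Icc.1 hd).1
    exact pow_nonneg (inv_nonneg.2 (by linarith)) _
  · rw [Finset.prod_pow]
    apply le_of_eq
    congr 1
    clear h2 hA hM h1 hT
    induction m with
    | zero => simp
    | succ m ih =>
      rw [Finset.prod_Icc_succ_top (by omega), ih]
      push_cast
      field_simp

lemma multichoose_eq' (r : ℕ) (hr : r + 1 = Fintype.card F) (j : ℕ) :
    (Fintype.card F).multichoose j = (r + j).choose r := by
  rw [← hr, Nat.multichoose_eq]
  have : r + 1 + j - 1 = r + j := by omega
  rw [this, ← Nat.choose_symm_add]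
 
lemma upper_N (r : ℕ) (hr : r + 1 = Fintype.card F) (m k : ℕ)
    (T : Finset (Multiset (Irr2 F)))
    (hT : ∀ s, s ∈ T ↔ (s.map (fun i : Irr2 F => i.1.natDegree - 1)).sum = m) :
    (Ncount F (m + k) k : ℝ) ≤ ((r : ℝ) + k) ^ r / r.factorial * T.card := by
  rw [Ncount_eq F m k T hT]
  have h : ∑ s ∈ T with s.card ≤ k, (Fintype.card F).multichoose (k - s.card) ≤
      T.card * (r + k).choose r := by
    refine (Finset.sum_le_card_nsmul _ _ ((r + k).choose r) fun s _ => ?_).trans ?_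
    · rw [multichoose_eq' F r hr]
      exact Nat.choose_le_choose r (by omega)
    · rw [smul_eq_mul]
      exact Nat.mul_le_mul_right _ (Finset.card_filter_le _ _)
  have h' : ((∑ s ∈ T with s.card ≤ k, (Fintype.card F).multichoose (k - s.card) : ℕ) : ℝ) ≤
      T.card * ((r + k).choose r : ℝ) := by exact_mod_cast h
  refine h'.trans ?_
  rw [mul_comm]
  exact mul_le_mul_of_nonneg_right (choose_bounds r k).2 (Nat.cast_nonneg _)

lemma lower_N (r : ℕ) (hr : r + 1 = Fintype.card F) (m k : ℕ)
    (T : Finset (Multiset (Irr2 F)))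
    (hT : ∀ s, s ∈ T ↔ (s.map (fun i : Irr2 F => i.1.natDegree - 1)).sum = m)
    (δ : ℝ) (hδ : 0 < δ) (hδ1 : δ < 1) :
    ((1 - δ) * k) ^ r / r.factorial *
      (T.card - (∑ s ∈ T, (2:ℝ) ^ s.card) * (2:ℝ) ^ (-(δ * k))) ≤ (Ncount F (m + k) k : ℝ) := by
  classical
  rw [Ncount_eq F m k T hT]
  push_cast
  have hk0 : (0:ℝ) ≤ k := Nat.cast_nonneg k
  have hc0 : 0 ≤ ((1 - δ) * k) ^ r / (r.factorial : ℝ) := by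
    have : 0 ≤ 1 - δ := by linarith
    positivity
  set T1 := T.filter (fun s => (s.card : ℝ) ≤ δ * k) with hT1
  have hsub : T1 ⊆ T.filter (fun s => s.card ≤ k) := by
    intro s hs
    rw [hT1, Finset.mem_filter] at hs
    rw [Finset.mem_filter]
    refine ⟨hs.1, ?_⟩
    have : (s.card : ℝ) ≤ k := hs.2.trans (by nlinarith)
    exact_mod_cast this
  have h1 : (T1.card : ℝ) * (((1 - δ) * k) ^ r / (r.factorial : ℝ)) ≤
      ∑ s ∈ T with s.card ≤ k, ((Fintype.card F).multichoose (k - s.card) : ℝ) := by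
    refine le_trans ?_ (Finset.sum_le_sum_of_subset_of_nonneg hsub fun _ _ _ => Nat.cast_nonneg _)
    rw [← nsmul_eq_mul]
    apply Finset.card_nsmul_le_sum
    intro s hs
    have hsk := (Finset.mem_filter.1 (hsub hs)).2
    rw [hT1, Finset.mem_filter] at hs
    rw [multichoose_eq' F r hr]
    refine le_trans ?_ (choose_bounds r (k - s.card)).1
    rw [Nat.cast_sub hsk]
    have : 0 ≤ 1 - δ := by linarith
    gcongr
    linarith [hs.2]
  refine le_trans ?_ h1
  rw [mul_comm]
  apply mul_le_mul_of_nonneg_right _ hc0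
  have h2 : (T.card : ℝ) = T1.card + (T.filter (fun s => ¬ (s.card : ℝ) ≤ δ * k)).card := by
    rw [hT1, ← Finset.card_filter_add_card_filter_not (s := T) (fun s => (s.card : ℝ) ≤ δ * k)]
    push_cast
    rfl
  have h3 : ((T.filter (fun s => ¬ (s.card : ℝ) ≤ δ * k)).card : ℝ) ≤
      (∑ s ∈ T, (2:ℝ) ^ s.card) * (2:ℝ) ^ (-(δ * k)) := by
    rw [Finset.sum_mul]
    refine le_trans ?_ (Finset.sum_le_sum_of_subset_of_nonneg
      (Finset.filter_subset (fun s => ¬ (s.card : ℝ) ≤ δ * k) T) fun _ _ _ => by positivity)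
    rw [← mul_one ((Finset.card _ : ℕ) : ℝ), ← nsmul_eq_mul]
    apply Finset.card_nsmul_le_sum
    intro s hs
    have := (Finset.mem_filter.1 hs).2
    rw [← Real.rpow_natCast, ← Real.rpow_add (by norm_num)]
    apply Real.one_le_rpow (by norm_num)
    linarith
  linarith

lemma tail_small (δ : ℝ) (hδ : 0 < δ) (Q : ℕ) (ξ : ℕ → ℝ)
    (hξ : Filter.Tendsto ξ Filter.atTop Filter.atTop) :
    ∀ᶠ n : ℕ in Filter.atTop, ∀ k m : ℕ, ξ n * Real.log n ≤ (k : ℝ) → m ≤ n →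
      ((m : ℝ) + 1) ^ Q * (2:ℝ) ^ (-(δ * k)) ≤ 1 / n := by
  have hl2 : 0 < Real.log 2 := Real.log_pos (by norm_num)
  filter_upwards [hξ.eventually_ge_atTop ((2 * Q + 1) / (δ * Real.log 2)),
    Filter.eventually_ge_atTop 2] with n hn hn2 k m hk hm
  have hn2' : (2:ℝ) ≤ n := by exact_mod_cast hn2
  have hlog : 0 ≤ Real.log n := Real.log_nonneg (by linarith)
  have hm' : (m:ℝ) ≤ n := by exact_mod_cast hm
  have h1 : ((m : ℝ) + 1) ^ Q ≤ ((n : ℝ) ^ 2) ^ Q := by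
    gcongr
    nlinarith
  have h2 : ((n : ℝ) ^ 2) ^ Q = Real.exp (Real.log n * (2 * Q)) := by
    rw [← pow_mul, ← Real.rpow_natCast, Real.rpow_def_of_pos (by linarith)]
    push_cast
    rfl
  have h3 : (2:ℝ) ^ (-(δ * k)) = Real.exp (Real.log 2 * (-(δ * k))) :=
    Real.rpow_def_of_pos (by norm_num) _
  have h4 : 1 / (n : ℝ) = Real.exp (- Real.log n) := by
    rw [Real.exp_neg, Real.exp_log (by linarith), one_div]
  calc _ ≤ ((n : ℝ) ^ 2) ^ Q * (2:ℝ) ^ (-(δ * k)) := by gcongr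
    _ = Real.exp (Real.log n * (2 * Q) + Real.log 2 * (-(δ * k))) := by
      rw [h2, h3, Real.exp_add]
    _ ≤ _ := by
      rw [h4]
      apply Real.exp_le_exp.2
      rw [div_le_iff₀ (by positivity)] at hn
      have a1 : (2 * Q + 1) * Real.log n ≤ ξ n * (δ * Real.log 2) * Real.log n :=
        mul_le_mul_of_nonneg_right hn hlog
      have a2 : ξ n * Real.log n * (δ * Real.log 2) ≤ k * (δ * Real.log 2) :=
        mul_le_mul_of_nonneg_right hk (by positivity)
      nlinarith

end Fin


theorem stmt0 (q : ℕ) (hq : IsPrimePow q) (hq2 : 2 < q)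
    (F : Type*) [Field F] [Fintype F] (hF : Fintype.card F = q)
    (B : ℝ) (hB : 2 ≤ B) (ξ : ℕ → ℝ) (hξ : Filter.Tendsto ξ Filter.atTop Filter.atTop)
    (ε : ℝ) (hε : 0 < ε) :
    ∃ N₀ : ℕ, ∀ n : ℕ, N₀ ≤ n → ∀ k : ℕ,
      ξ n * Real.log n ≤ (k : ℝ) → (k : ℝ) ≤ (n : ℝ) / B →
      |(Ncount F n k : ℝ) /
          (Cconst q F * (q : ℝ) ^ (n - k) * (k : ℝ) ^ (q - 1) * ((n - k : ℕ) : ℝ) ^ (q - 1))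
        - 1| ≤ ε := by
  subst hF
  obtain ⟨r, hr⟩ : ∃ r, r + 1 = Fintype.card F := ⟨Fintype.card F - 1, by omega⟩
  have hr' : Fintype.card F - 1 = r := by omega
  obtain ⟨x, hx⟩ : ∃ x : ℝ, x = (Fintype.card F : ℝ)⁻¹ := ⟨_, rfl⟩
  have hq3' : (3:ℝ) ≤ Fintype.card F := by exact_mod_cast hq2
  have hqx : (Fintype.card F : ℝ) * x = 1 := by rw [hx]; exact mul_inv_cancel₀ (by linarith)
  have hx0 : 0 < x := by rw [hx]; positivity
  rw [Cconst_eq F x hx r hr, hr']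
  have hVpos := V_pos F x hx
  have hlim := g_asymp F x hx r hr
  generalize (∑' i, hser F i * x ^ i) = V at hVpos hlim ⊢
  have hw : ∀ i : Irr2 F, 1 ≤ i.1.natDegree - 1 := fun i => by have := i.2.2.2; omega
  obtain ⟨T, hT⟩ : ∃ T : ℕ → Finset (Multiset (Irr2 F)), ∀ m, ∀ s, s ∈ T m ↔
      (s.map (fun i : Irr2 F => i.1.natDegree - 1)).sum = m :=
    ⟨fun m => (finite_weight _ hw m (finite_Irr2' F m)).toFinset, fun m s => by simp⟩
  have hf0 : (0:ℝ) < r.factorial := by exact_mod_cast r.factorial_pos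
  -- normalized count
  obtain ⟨a, ha⟩ : ∃ a : ℕ → ℝ, ∀ m, a m = (T m).card * x ^ m / (m : ℝ) ^ r := ⟨_, fun _ => rfl⟩
  have hlim1 : Filter.Tendsto a Filter.atTop (nhds (V * (r.factorial : ℝ)⁻¹)) := by
    refine hlim.congr fun m => ?_
    rw [ha]
    congr 2
    have h := genfun' _ hw m m le_rfl (finite_Irr2' F m) 1 (T m) (hT m)
    simp only [one_pow, Finset.sum_const, nsmul_eq_mul, mul_one] at h
    rw [h]
    congr 1
    refine Finset.prod_congr rfl fun d hd => ?_
    rw [ncard_Irr2' F d (Finset.mem_Icc.1 hd).1]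
  have hVr : V * (r.factorial : ℝ)⁻¹ * (r.factorial / V) = 1 := by field_simp
  -- choice of δ
  obtain ⟨δ, hδ, hδ1, hδε⟩ : ∃ δ : ℝ, 0 < δ ∧ δ < 1 ∧ 1 - ε < (1 - δ) ^ r := by
    refine ⟨min (1 / 2) (ε / (2 * (r + 1))), lt_min (by norm_num) (by positivity),
      (min_le_left _ _).trans_lt (by norm_num), ?_⟩
    set δ := min (1 / 2) (ε / (2 * ((r : ℝ) + 1))) with hδdef
    have h1 : δ ≤ 1 / 2 := min_le_left _ _
    have h2 : δ ≤ ε / (2 * ((r : ℝ) + 1)) := min_le_right _ _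
    have h0 : 0 < δ := lt_min (by norm_num) (by positivity)
    have b := one_add_mul_le_pow (show (-2:ℝ) ≤ -δ by linarith) r
    rw [← sub_eq_add_neg] at b
    rw [le_div_iff₀ (by positivity)] at h2
    have hr0 : (0:ℝ) ≤ r := Nat.cast_nonneg r
    nlinarith
  -- the filter
  set L : Filter (ℕ × ℕ) := Filter.comap Prod.fst Filter.atTop ⊓
    Filter.principal {p | ξ p.1 * Real.log p.1 ≤ (p.2 : ℝ) ∧ (p.2 : ℝ) ≤ (p.1 : ℝ) / B} with hL
  have hLn : Filter.Tendsto (fun p : ℕ × ℕ => p.1) L Filter.atTop :=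
    Filter.tendsto_comap.mono_left inf_le_left
  have hLS : ∀ᶠ p in L, ξ p.1 * Real.log p.1 ≤ (p.2 : ℝ) ∧ (p.2 : ℝ) ≤ (p.1 : ℝ) / B :=
    Filter.Eventually.filter_mono inf_le_right (Filter.eventually_principal.2 fun p hp => hp)
  have hLk : Filter.Tendsto (fun p : ℕ × ℕ => p.2) L Filter.atTop := by
    rw [← tendsto_natCast_atTop_iff (R := ℝ)]
    have h1 : Filter.Tendsto (fun n : ℕ => ξ n * Real.log n) Filter.atTop Filter.atTop :=
      hξ.atTop_mul_atTop₀ (Real.tendsto_log_atTop.comp tendsto_natCast_atTop_atTop)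
    exact Filter.tendsto_atTop_mono' L (hLS.mono fun p hp => hp.1) (h1.comp hLn)
  have hhalf : ∀ᶠ p in L, 2 * p.2 ≤ p.1 := by
    filter_upwards [hLS] with p hp
    have h0 : (0:ℝ) ≤ p.2 := Nat.cast_nonneg _
    have h1 := hp.2
    rw [le_div_iff₀ (by linarith)] at h1
    have : 2 * (p.2 : ℝ) ≤ p.1 := by nlinarith
    exact_mod_cast this
  have hLm : Filter.Tendsto (fun p : ℕ × ℕ => p.1 - p.2) L Filter.atTop :=
    Filter.tendsto_atTop_mono' L (hhalf.mono fun p hp => by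
      show p.2 ≤ p.1 - p.2
      omega) hLk
  have hLnR : Filter.Tendsto (fun p : ℕ × ℕ => 1 / (p.1 : ℝ)) L (nhds 0) :=
    tendsto_one_div_atTop_nhds_zero_nat.comp hLn
  have hLkR : Filter.Tendsto (fun p : ℕ × ℕ => 1 / (p.2 : ℝ)) L (nhds 0) :=
    tendsto_one_div_atTop_nhds_zero_nat.comp hLk
  have hup : Filter.Tendsto (fun p : ℕ × ℕ => (1 + r * (1 / (p.2 : ℝ))) ^ r *
      (a (p.1 - p.2) * (r.factorial / V))) L (nhds 1) := by
    have h1 := ((hLkR.const_mul (r : ℝ)).const_add 1).pow r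
    have h2 := (hlim1.comp hLm).mul_const ((r.factorial : ℝ) / V)
    rw [hVr] at h2
    have := h1.mul h2
    simpa using this
  have hlo : Filter.Tendsto (fun p : ℕ × ℕ => (1 - δ) ^ r *
      ((a (p.1 - p.2) - 1 / (p.1 : ℝ)) * (r.factorial / V))) L (nhds ((1 - δ) ^ r)) := by
    have h2 := (((hlim1.comp hLm).sub hLnR).mul_const ((r.factorial : ℝ) / V)).const_mul
      ((1 - δ) ^ r)
    rw [sub_zero, hVr, mul_one] at h2
    exact h2
  have hfin : ∀ᶠ p in L, |(Ncount F p.1 p.2 : ℝ) /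
          (((r.factorial : ℝ)⁻¹) ^ 2 * V * (Fintype.card F : ℝ) ^ (p.1 - p.2) * (p.2 : ℝ) ^ r *
            ((p.1 - p.2 : ℕ) : ℝ) ^ r) - 1| ≤ ε := by
    filter_upwards [hLS, hhalf, hLk.eventually_ge_atTop 1,
      hLn.eventually (tail_small δ hδ (6 * Fintype.card F) ξ hξ),
      hup.eventually_lt_const (show (1:ℝ) < 1 + ε by linarith),
      hlo.eventually_const_lt hδε] with p hp hph hk1 htail hU hLo
    obtain ⟨n, k⟩ := p
    simp only at hp hph hk1 htail hU hLo ⊢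
    obtain ⟨m, rfl⟩ : ∃ m, n = m + k := ⟨n - k, by omega⟩
    rw [Nat.add_sub_cancel] at hU hLo ⊢
    have hm1 : 1 ≤ m := by omega
    have hmR : (1:ℝ) ≤ m := by exact_mod_cast hm1
    have hkR : (1:ℝ) ≤ k := by exact_mod_cast hk1
    have hk0 : (0:ℝ) < k := by linarith
    have hm0 : (0:ℝ) < m := by linarith
    have hq0 : (0:ℝ) < Fintype.card F := by linarith
    have hqm : (Fintype.card F : ℝ) ^ m * x ^ m = 1 := by rw [← mul_pow, hqx, one_pow]
    have hden : 0 < ((r.factorial : ℝ)⁻¹) ^ 2 * V * (Fintype.card F : ℝ) ^ m * (k : ℝ) ^ r *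
            (m : ℝ) ^ r := by positivity
    have hup' := upper_N F r hr m k (T m) (hT m)
    have hlo' := lower_N F r hr m k (T m) (hT m) δ hδ hδ1
    have htb := tail_bound F x hx (by omega) m (T m) (hT m)
    have htail' := htail k m hp.1 (by omega)
    have hcard : ((T m).card : ℝ) = a m * (m : ℝ) ^ r * (Fintype.card F : ℝ) ^ m := by
      rw [ha, div_mul_cancel₀ _ (by positivity), mul_assoc, mul_comm (x ^ m), hqm, mul_one]
    rw [abs_le]
    constructor
    · rw [neg_le_sub_iff_le_add, ← sub_le_iff_le_add]
      refine hLo.le.trans ?_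
      rw [le_div_iff₀ hden]
      refine le_trans ?_ hlo'
      have hS : (∑ s ∈ T m, (2:ℝ) ^ s.card) * (2:ℝ) ^ (-(δ * k)) ≤
          1 / ((m + k : ℕ) : ℝ) * (m : ℝ) ^ r * (Fintype.card F : ℝ) ^ m := by
        have h2 : (0:ℝ) < (2:ℝ) ^ (-(δ * k)) := by positivity
        have hmr : 1 ≤ (m : ℝ) ^ r := one_le_pow₀ hmR
        calc (∑ s ∈ T m, (2:ℝ) ^ s.card) * (2:ℝ) ^ (-(δ * k)) =
              ((∑ s ∈ T m, (2:ℝ) ^ s.card) * x ^ m) * (2:ℝ) ^ (-(δ * k)) *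
                (Fintype.card F : ℝ) ^ m := by
              linear_combination (-(∑ s ∈ T m, (2:ℝ) ^ s.card) * (2:ℝ) ^ (-(δ * k))) * hqm
          _ ≤ (((m : ℝ) + 1) ^ (6 * Fintype.card F)) * (2:ℝ) ^ (-(δ * k)) *
                (Fintype.card F : ℝ) ^ m := by gcongr
          _ ≤ 1 / ((m + k : ℕ) : ℝ) * (Fintype.card F : ℝ) ^ m := by gcongr
          _ ≤ _ := by
              apply mul_le_mul_of_nonneg_right _ (by positivity)
              exact le_mul_of_one_le_right (by positivity) hmr
      have hc0 : 0 ≤ ((1 - δ) * k) ^ r / (r.factorial : ℝ) := by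
        have : 0 ≤ 1 - δ := by linarith
        positivity
      refine le_trans (le_of_eq ?_) (mul_le_mul_of_nonneg_left (sub_le_sub_left hS _) hc0)
      rw [hcard, mul_pow]
      field_simp
    · rw [sub_le_iff_le_add, add_comm ε 1]
      refine le_trans ?_ hU.le
      rw [div_le_iff₀ hden]
      refine hup'.trans (le_of_eq ?_)
      have : (1 + (r : ℝ) * (1 / (k : ℝ))) = (r + k) / k := by field_simp; ring
      rw [hcard, this, div_pow]
      field_simp
  rw [hL, Filter.eventually_inf_principal, Filter.eventually_comap] at hfin
  obtain ⟨N₀, hN⟩ := Filter.eventually_atTop.1 hfin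
  exact ⟨N₀, fun n hn k h1 h2 => hN n hn (n, k) rfl ⟨h1, h2⟩⟩
end

section
/- Let q be a prime power. For all integers n, k with 1 ≤ k ≤ n/2, one has N(n,k) = Σ_{j=1}^{k} C(k−j+q−1, q−1) · N'(n+j−k, j), where C(·,·) denotes a binomial coefficient. -/
open Polynomial

/-- `Ncount' F n k` = number of monic polynomials of degree `n` over `F` with no root in `F`
and with `Omega f = k`. -/
noncomputable def Ncount' (F : Type*) [Field F] (n k : ℕ) : ℕ :=
  Set.ncard {f : F[X] | f.Monic ∧ f.natDegree = n ∧ (∀ a : F, f.eval a ≠ 0) ∧ Omega f = k}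


lemma Omega_eq {F : Type*} [Field F] (f : F[X]) :
    Omega f = (by classical exact (UniqueFactorizationMonoid.normalizedFactors f).card) := by
  classical
  simp [Omega, UniqueFactorizationMonoid.normalizedFactors]

lemma Omega_mul {F : Type*} [Field F] {f g : F[X]} (hf : f ≠ 0) (hg : g ≠ 0) :
    Omega (f * g) = Omega f + Omega g := by
  classical
  simp only [Omega_eq]
  rw [UniqueFactorizationMonoid.normalizedFactors_mul hf hg, Multiset.card_add]

lemma Omega_X_sub_C {F : Type*} [Field F] (a : F) : Omega (X - C a) = 1 := by
  classical
  simp only [Omega_eq]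
  rw [UniqueFactorizationMonoid.normalizedFactors_irreducible (irreducible_X_sub_C a)]
  simp

lemma Omega_prod_s4 {F : Type*} [Field F] (s : Multiset F) :
    Omega (s.map (fun a => X - C a)).prod = s.card := by
  classical
  induction s using Multiset.induction with
  | empty => simp [Omega_eq]
  | cons a s ih =>
    rw [Multiset.map_cons, Multiset.prod_cons, Omega_mul (X_sub_C_ne_zero a)
      (monic_multiset_prod_of_monic _ _ (fun a _ => monic_X_sub_C a)).ne_zero, ih,
      Omega_X_sub_C, Multiset.card_cons, add_comm]

lemma eq_one_of_Omega {F : Type*} [Field F] {f : F[X]} (hf : f.Monic) (h : Omega f = 0) :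
    f = 1 := by
  have h1 := UniqueFactorizationMonoid.factors_prod hf.ne_zero
  rw [Omega, Multiset.card_eq_zero] at h
  rw [h, Multiset.prod_zero] at h1
  exact hf.isUnit_iff.1 (h1.isUnit isUnit_one)

lemma finite_deg (F : Type*) [Field F] [Fintype F] (n : ℕ) :
    {f : F[X] | f.natDegree = n}.Finite := by
  have : Finite (degreeLT F (n+1)) := Finite.of_equiv _ (degreeLTEquiv F (n+1)).toEquiv.symm
  refine (Set.toFinite (degreeLT F (n+1) : Set F[X])).subset ?_
  intro f hf
  simp only [Set.mem_ofPred_eq] at hf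
  simp only [SetLike.mem_coe, mem_degreeLT]
  refine lt_of_le_of_lt degree_le_natDegree ?_
  rw [hf]
  exact_mod_cast Nat.lt_succ_self n

lemma roots_zero_of {F : Type*} [Field F] {g : F[X]} (hg : ∀ a, g.eval a ≠ 0) : g.roots = 0 := by
  refine Multiset.eq_zero_of_forall_notMem fun a ha => hg a ?_
  exact (mem_roots'.1 ha).2

lemma roots_prod_mul {F : Type*} [Field F] (s : Multiset F) {g : F[X]} (hg0 : g.Monic)
    (hg : ∀ a, g.eval a ≠ 0) : ((s.map (fun a => X - C a)).prod * g).roots = s := by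
  have hm := monic_multiset_prod_of_monic s (fun a : F => X - C a) (fun a _ => monic_X_sub_C a)
  rw [roots_mul (hm.mul hg0).ne_zero, roots_zero_of hg, roots_multiset_prod_X_sub_C, add_zero]

theorem stmt4 (q : ℕ) (hq : IsPrimePow q) (F : Type*) [Field F] [Fintype F]
    (hF : Fintype.card F = q) (n k : ℕ) (hk : 1 ≤ k) (hkn : 2 * k ≤ n) :
    Ncount F n k =
      ∑ j ∈ Finset.Icc 1 k, Nat.choose (k - j + q - 1) (q - 1) * Ncount' F (n + j - k) j := by
  classical
  have hqpos : 0 < q := hq.pos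
  have hfin : {f : F[X] | f.Monic ∧ f.natDegree = n ∧ Omega f = k}.Finite :=
    (finite_deg F n).subset fun f hf => hf.2.1
  have hfin' : ∀ m j, {f : F[X] | f.Monic ∧ f.natDegree = m ∧ (∀ a : F, f.eval a ≠ 0) ∧
      Omega f = j}.Finite := fun m j => (finite_deg F m).subset fun f hf => hf.2.1
  have hdec : ∀ f : F[X], f.Monic → f.natDegree = n → Omega f = k → ∃ g : F[X],
      (f.roots.map (fun a => X - C a)).prod * g = f ∧ f.roots.card + g.natDegree = n ∧
      f.roots.card + Omega g = k ∧ g.Monic ∧ ∀ a, g.eval a ≠ 0 := by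
    intro f hf hd hO
    obtain ⟨g, h1, h2, h3⟩ := exists_prod_multiset_X_sub_C_mul f
    have hm := monic_multiset_prod_of_monic f.roots (fun a : F => X - C a)
      (fun a _ => monic_X_sub_C a)
    have hg : g.Monic := hm.of_mul_monic_left (by rw [h1]; exact hf)
    refine ⟨g, h1, h2.trans hd, ?_, hg, ?_⟩
    · rw [← Omega_prod_s4, ← Omega_mul hm.ne_zero hg.ne_zero, h1, hO]
    · intro a ha
      have : a ∈ g.roots := (mem_roots hg.ne_zero).2 ha
      rw [h3] at this
      simp at this
  rw [Ncount, Set.ncard_eq_toFinset_card _ hfin,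
    Finset.card_eq_sum_card_fiberwise (f := fun f => k - f.roots.card) (t := Finset.Icc 1 k)]
  · refine Finset.sum_congr rfl fun j hj => ?_
    rw [Finset.mem_Icc] at hj
    have hc : Nat.choose (k - j + q - 1) (q - 1) = (Finset.univ : Finset (Sym F (k - j))).card := by
      rw [Finset.card_univ, Sym.card_sym_eq_choose, hF]
      rw [show q + (k - j) - 1 = (q - 1) + (k - j) by omega,
        show k - j + q - 1 = (q - 1) + (k - j) by omega, Nat.choose_symm_add]
    rw [Ncount', Set.ncard_eq_toFinset_card _ (hfin' _ _), hc, ← Finset.card_product]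
    symm
    refine Finset.card_bij (fun p _ => (p.1.1.map (fun a => X - C a)).prod * p.2) ?_ ?_ ?_
    · rintro ⟨⟨s, hs⟩, g⟩ h
      simp only [Finset.mem_product, Set.Finite.mem_toFinset,
        Set.mem_ofPred_eq] at h
      obtain ⟨-, hg, hd, hr, hO⟩ := h
      have hm := monic_multiset_prod_of_monic s (fun a : F => X - C a)
        (fun a _ => monic_X_sub_C a)
      simp only [Finset.mem_filter, Set.Finite.mem_toFinset, Set.mem_ofPred_eq]
      refine ⟨⟨hm.mul hg, ?_, ?_⟩, ?_⟩
      · rw [hm.natDegree_mul hg, natDegree_multiset_prod_X_sub_C_eq_card, hs, hd]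
        omega
      · rw [Omega_mul hm.ne_zero hg.ne_zero, Omega_prod_s4, hs, hO]
        omega
      · rw [roots_prod_mul s hg hr, hs]
        omega
    · rintro ⟨⟨s, hs⟩, g⟩ h ⟨⟨s', hs'⟩, g'⟩ h' heq
      simp only [Finset.mem_product, Set.Finite.mem_toFinset,
        Set.mem_ofPred_eq] at h h' heq
      replace h := h.2
      replace h' := h'.2
      have hss : s = s' := by
        have := congrArg roots heq
        rwa [roots_prod_mul s h.1 h.2.2.1, roots_prod_mul s' h'.1 h'.2.2.1] at this
      subst hss
      have hm := monic_multiset_prod_of_monic s (fun a : F => X - C a)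
        (fun a _ => monic_X_sub_C a)
      have := mul_left_cancel₀ hm.ne_zero heq
      subst this
      rfl
    · intro f hf
      simp only [Finset.mem_filter, Set.Finite.mem_toFinset, Set.mem_ofPred_eq] at hf
      obtain ⟨⟨hf, hd, hO⟩, hr⟩ := hf
      obtain ⟨g, h1, h2, h3, h4, h5⟩ := hdec f hf hd hO
      refine ⟨⟨⟨f.roots, by omega⟩, g⟩, ?_, h1⟩
      simp only [Finset.mem_product, Set.Finite.mem_toFinset,
        Set.mem_ofPred_eq]
      exact ⟨Finset.mem_univ _, h4, by omega, h5, by omega⟩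
  · intro f hf
    simp only [Set.Finite.coe_toFinset, Set.mem_ofPred_eq] at hf
    obtain ⟨hf, hd, hO⟩ := hf
    obtain ⟨g, h1, h2, h3, h4, h5⟩ := hdec f hf hd hO
    simp only [Finset.coe_Icc, Set.mem_Icc]
    refine ⟨?_, by omega⟩
    by_contra hlt
    have : g = 1 := eq_one_of_Omega h4 (by omega)
    rw [this, natDegree_one] at h2
    omega
end

section
/- There is an absolute constant C such that for every integer n ≥ 2 and every real r > 0, the circle integral ∫_{|z|=r} |n^{z−r}| |dz| = r · ∫_0^{2π} n^{r(cos θ − 1)} dθ satisfies ∫_{|z|=r} |n^{z−r}| |dz| ≤ C · r/√(r·log n). -/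
theorem stmt17 :
    ∃ C : ℝ, ∀ n : ℕ, 2 ≤ n → ∀ r : ℝ, 0 < r →
      r * ∫ θ in (0 : ℝ)..(2 * Real.pi), (n : ℝ) ^ (r * (Real.cos θ - 1)) ≤
        C * r / Real.sqrt (r * Real.log n) := by
  refine ⟨2 * Real.sqrt (Real.pi / (2 / Real.pi ^ 2)), fun n hn r hr => ?_⟩
  have hpi := Real.pi_pos
  have hn1 : (1 : ℝ) < n := by exact_mod_cast hn
  have hlog : 0 < Real.log n := Real.log_pos hn1
  have hL : 0 < r * Real.log n := mul_pos hr hlog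
  set L := r * Real.log n with hLdef
  set b : ℝ := 2 / Real.pi ^ 2 * L with hb
  have hb0 : 0 < b := by positivity
  have hi : MeasureTheory.Integrable (fun x : ℝ => Real.exp (-b * x ^ 2)) :=
    integrable_exp_neg_mul_sq hb0
  have hi2 : MeasureTheory.Integrable (fun x : ℝ => Real.exp (-b * (x - 2 * Real.pi) ^ 2)) :=
    hi.comp_sub_right (2 * Real.pi)
  have e1 : ∫ x : ℝ, Real.exp (-b * x ^ 2) = Real.sqrt (Real.pi / b) := integral_gaussian b
  have e2 : ∫ x : ℝ, Real.exp (-b * (x - 2 * Real.pi) ^ 2) = Real.sqrt (Real.pi / b) := by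
    rw [← e1]
    exact MeasureTheory.integral_sub_right_eq_self (fun x : ℝ => Real.exp (-b * x ^ 2)) _
  have key : ∫ θ in (0 : ℝ)..(2 * Real.pi), (n : ℝ) ^ (r * (Real.cos θ - 1)) ≤
      2 * Real.sqrt (Real.pi / b) := by
    rw [intervalIntegral.integral_of_le (by positivity)]
    calc _ ≤ ∫ θ in Set.Ioc (0 : ℝ) (2 * Real.pi),
          (Real.exp (-b * θ ^ 2) + Real.exp (-b * (θ - 2 * Real.pi) ^ 2)) := by
          apply MeasureTheory.setIntegral_mono_on
          · apply Continuous.integrableOn_Ioc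
            apply Continuous.rpow continuous_const (by fun_prop)
            intro x; left; positivity
          · exact (hi.add hi2).integrableOn
          · exact measurableSet_Ioc
          · intro x hx
            rw [Real.rpow_def_of_pos (by positivity)]
            have main : ∀ y : ℝ, |y| ≤ Real.pi → Real.cos y = Real.cos x →
                Real.exp (Real.log n * (r * (Real.cos x - 1))) ≤ Real.exp (-b * y ^ 2) := by
              intro y hy hc
              rw [← hc]
              apply Real.exp_le_exp.2
              have h := Real.cos_le_one_sub_mul_cos_sq hy
              have h2 := mul_le_mul_of_nonneg_left h hL.le
              rw [hb]
              calc Real.log n * (r * (Real.cos y - 1)) = L * Real.cos y - L := by rw [hLdef]; ring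
                _ ≤ L * (1 - 2 / Real.pi ^ 2 * y ^ 2) - L := by linarith
                _ = _ := by ring
            rcases le_total x Real.pi with h | h
            · have := main x (abs_le.2 ⟨by linarith [hx.1], h⟩) rfl
              have := Real.exp_pos (-b * (x - 2 * Real.pi) ^ 2)
              linarith
            · have := main (x - 2 * Real.pi) (abs_le.2 ⟨by linarith, by linarith [hx.2]⟩)
                (Real.cos_sub_two_pi x)
              have := Real.exp_pos (-b * x ^ 2)
              linarith
      _ ≤ ∫ θ : ℝ, (Real.exp (-b * θ ^ 2) + Real.exp (-b * (θ - 2 * Real.pi) ^ 2)) := by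
          apply MeasureTheory.setIntegral_le_integral (hi.add hi2)
          exact Filter.Eventually.of_forall fun x => by
            simp only [Pi.zero_apply, Pi.add_apply]; positivity
      _ = _ := by
          rw [MeasureTheory.integral_add hi hi2, e1, e2]; ring
  have e3 : Real.sqrt (Real.pi / b) =
      Real.sqrt (Real.pi / (2 / Real.pi ^ 2)) / Real.sqrt L := by
    rw [hb, ← div_div, Real.sqrt_div (by positivity)]
  rw [e3] at key
  calc _ ≤ r * _ := mul_le_mul_of_nonneg_left key hr.le
    _ = _ := by ring
end
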